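/- arXiv:2409.06063 — 5 statements merged into one kernel-verified Lean document; each statement's English description precedes it below -/
import Mathlib

section
/- Let G be a finite simple graph with n vertices and m edges, where m ≥ 4, let k be an integer with k ≥ m − 1, and let L be a k-assignment for G. Then P(G,L) ≥ P(G,k) + (k − m + 1) · k^(n−3) · S, where S = Σ_{uv ∈ E(G)} |L(u) \ L(v)| (the sum taken over the edge set, each edge counted once; note |L(u) \ L(v)| = |L(v) \ L(u)| since all lists have size k). -/
/-!
The number of colorings is expanded by inclusion-exclusion over sets `A` of edges that are forced
to be monochromatic; as in Whitney's broken-cycle theorem, a sign-reversing involution removes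
every `A` except those in a family `unbroken` (`listP_eq_sum`). The involution toggles the largest
edge whose ends are already joined by larger edges of `A`, which changes no color constraint, so it
works for list colorings too. The unbroken sets form a simplicial complex of forests.

For a forest `A` on `n` vertices, let `D(A)` be the number of `A`-monochromatic `k`-colorings minus
the number of `A`-monochromatic `L`-colorings, and write `α(uv) = k - |L(u) ∩ L(v)| = |L(u) \ L(v)|`.
Both numbers are products over the components of `A`, which yields (`deficit_le`, `le_deficit`)
`k^(n-|A|-1) * max_{e ∈ A} α(e) ≤ D(A) ≤ k^(n-|A|-1) * ∑_{e ∈ A} α(e)`.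

Let `T j` be the sum of `D(A)`, and `U j` the sum of `∑_{e ∈ A} α(e)`, over the unbroken `A` of size
`j`. Bounding the maximum below by the average, `k^(n-j-1) * U j / j ≤ T j ≤ k^(n-j-1) * U j`.
Double counting of pairs `(A, f)` with `f ∈ A` in the complex gives `j * U (j+1) ≤ (m-1) * U j` for
`1 ≤ j` (`level_double_count`). As `m - 1 ≤ k`, the sequence `T` is nonincreasing from index `1` on,
so in `P(G,L) - P(G,k) = T 1 - T 2 + (T 3 - T 4 + ⋯)` the bracket is nonnegative, while
`T 1 - T 2 ≥ k^(n-2) * U 1 - (m-1) * k^(n-3) * U 1` with `U 1 = S`.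
-/

/-- `f` is a proper coloring of `G`: adjacent vertices get different colors. -/
def IsProper {V α : Type*} (G : SimpleGraph V) (f : V → α) : Prop :=
  ∀ ⦃u v : V⦄, G.Adj u v → f u ≠ f v

/-- `P(G,k)`: the number of proper colorings of `G` with colors in `Fin k`. -/
noncomputable def chromP {V : Type*} (G : SimpleGraph V) (k : ℕ) : ℕ :=
  Nat.card {f : V → Fin k // IsProper G f}

/-- `P(G,L)`: the number of proper `L`-colorings of `G`. -/
noncomputable def listP {V : Type*} (G : SimpleGraph V) (L : V → Finset ℕ) : ℕ :=
  Nat.card {f : V → ℕ // IsProper G f ∧ ∀ v, f v ∈ L v}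

/-- `u_ℓ(G,L)`: the number of equivalence classes of proper `L`-colorings of `G`,
where `f ~ g` iff `f ∘ π = g` for some automorphism `π` of `G`. -/
noncomputable def uell {V : Type*} (G : SimpleGraph V) (L : V → Finset ℕ) : ℕ :=
  Nat.card (Quot (fun f g : {f : V → ℕ // IsProper G f ∧ ∀ v, f v ∈ L v} =>
    ∃ π : G ≃g G, ∀ v, f.1 (π v) = g.1 v))

/-- `P(𝒢,k)`: the number of orbits of the action of `Aut(G)` on proper colorings
`V → Fin k` (where `π` sends `f` to `f ∘ π⁻¹`); two colorings are in the same orbit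
iff `f ∘ π = g` for some automorphism `π`. -/
noncomputable def unlabeledP {V : Type*} (G : SimpleGraph V) (k : ℕ) : ℕ :=
  Nat.card (Quot (fun f g : {f : V → Fin k // IsProper G f} =>
    ∃ π : G ≃g G, ∀ v, f.1 (π v) = g.1 v))

/-- `P_ℓ(𝒢,k)`: the minimum of `u_ℓ(G,L)` over all `k`-assignments `L` for `G`. -/
noncomputable def Pell {V : Type*} (G : SimpleGraph V) (k : ℕ) : ℕ :=
  sInf {n | ∃ L : V → Finset ℕ, (∀ v, (L v).card = k) ∧ n = uell G L}

namespace DongZhang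

open Finset

/-- `f` takes the same value at both ends of `e`. -/
def Mono {V β : Type*} (f : V → β) (e : Sym2 V) : Prop := (e.map f).IsDiag

@[simp] lemma mono_mk {V β : Type*} (f : V → β) (a b : V) : Mono f s(a, b) ↔ f a = f b := by
  simp [Mono]

section

open Classical

variable {V : Type*}

/-- The number of `L`-colorings, not necessarily proper, that are constant on each edge of `A`. -/
noncomputable def monoCount [Fintype V] (L : V → Finset ℕ) (A : Finset (Sym2 V)) : ℕ :=
  #{f ∈ Fintype.piFinset L | ∀ e ∈ A, Mono f e}

/-- The ends of `e` lie in one component of the graph formed by the edges of `A` of rank larger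
than that of `e`; connectedness is expressed by saying that no function constant along these edges
separates the ends. -/
def Active (r : Sym2 V → ℕ) (A : Finset (Sym2 V)) (e : Sym2 V) : Prop :=
  ∀ f : V → ℕ, (∀ x ∈ A, r e < r x → Mono f x) → Mono f e

/-- The subsets of `E` that contain no broken cycle: cycles of `E` with their edge of smallest rank
removed. -/
noncomputable def unbroken [Fintype V] (r : Sym2 V → ℕ) (E : Finset (Sym2 V)) :
    Finset (Finset (Sym2 V)) :=
  {A ∈ E.powerset | ∀ e ∈ E, ¬ Active r A e}

/-- `|L(u) \ L(v)|` for `e = uv`, when all lists have size `k`; this form is visibly symmetric. -/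
noncomputable def defect (L : V → Finset ℕ) (k : ℕ) (e : Sym2 V) : ℚ :=
  Sym2.lift ⟨fun u v => (k : ℚ) - #(L u ∩ L v), fun u v => by simp only [inter_comm]⟩ e

@[simp] lemma defect_mk (L : V → Finset ℕ) (k : ℕ) (u v : V) :
    defect L k s(u, v) = (k : ℚ) - #(L u ∩ L v) := rfl

lemma defect_nonneg {L : V → Finset ℕ} {k : ℕ} (hL : ∀ v, #(L v) = k) (e : Sym2 V) :
    0 ≤ defect L k e := by
  induction e with | _ u v
  have : #(L u ∩ L v) ≤ k := (card_le_card inter_subset_left).trans (hL u).le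
  simpa using this

/-! ### Inclusion-exclusion and broken cycles -/

lemma listP_eq_sum_powerset [Fintype V] (G : SimpleGraph V) (E : Finset (Sym2 V))
    (hE : ∀ u v, s(u, v) ∈ E ↔ G.Adj u v) (L : V → Finset ℕ) :
    (listP G L : ℚ) = ∑ A ∈ E.powerset, (-1) ^ #A * (monoCount L A : ℚ) := by
  have h1 : listP G L = #{f ∈ Fintype.piFinset L | ∀ e ∈ E, ¬ Mono f e} := by
    refine Nat.subtype_card _ fun f => ?_
    simp only [mem_filter, Fintype.mem_piFinset, and_comm (a := IsProper G f)]
    refine and_congr_right fun _ => ⟨fun h u v huv => ?_, fun h e he => ?_⟩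
    · simpa using h _ ((hE u v).2 huv)
    · induction e with | _ u v
      simpa using h ((hE u v).1 he)
  have h2 : ∀ f : V → ℕ, (if ∀ e ∈ E, ¬ Mono f e then (1 : ℚ) else 0)
      = ∑ A ∈ E.powerset, (-1) ^ #A * (if ∀ e ∈ A, Mono f e then (1 : ℚ) else 0) := by
    intro f
    have h3 : (if ∀ e ∈ E, ¬ Mono f e then (1 : ℚ) else 0)
        = ∏ e ∈ E, (1 - if Mono f e then (1 : ℚ) else 0) := by
      have h4 : ∀ e, (1 - if Mono f e then (1 : ℚ) else 0) = if ¬ Mono f e then 1 else 0 := by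
        intro e
        by_cases h : Mono f e <;> simp [h]
      simp_rw [h4]
      rw [Finset.prod_boole]
      congr
    rw [h3, Finset.prod_sub]
    refine sum_congr rfl fun A _ => ?_
    simp [Finset.prod_boole]
  rw [h1, card_filter]
  push_cast
  simp_rw [h2]
  rw [sum_comm]
  refine sum_congr rfl fun A _ => ?_
  rw [← mul_sum, monoCount, card_filter]
  push_cast
  rfl

/-- Adds `e` to `A`, or removes it if it is already there. -/
noncomputable def toggle (e : Sym2 V) (A : Finset (Sym2 V)) : Finset (Sym2 V) :=
  if e ∈ A then A.erase e else insert e A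

lemma mem_toggle_of_ne {e x : Sym2 V} (A : Finset (Sym2 V)) (h : x ≠ e) :
    x ∈ toggle e A ↔ x ∈ A := by
  unfold toggle; split_ifs <;> simp [h]

lemma mem_toggle_self (e : Sym2 V) (A : Finset (Sym2 V)) : e ∈ toggle e A ↔ e ∉ A := by
  unfold toggle; split_ifs with h <;> simp [h]

lemma toggle_toggle (e : Sym2 V) (A : Finset (Sym2 V)) : toggle e (toggle e A) = A := by
  ext x
  by_cases h : x = e
  · subst h; simp [mem_toggle_self]
  · simp [mem_toggle_of_ne _ h]

lemma neg_one_pow_card_toggle (e : Sym2 V) (A : Finset (Sym2 V)) :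
    (-1 : ℚ) ^ #(toggle e A) = - (-1) ^ #A := by
  unfold toggle; split_ifs with h
  · rw [← card_erase_add_one h]; ring
  · rw [card_insert_of_notMem h]; ring

/-- Whether `e'` is active depends only on the edges of rank above that of `e'`, so toggling an edge
of smaller or equal rank does not matter. -/
lemma active_toggle {r : Sym2 V → ℕ} {e e' : Sym2 V} (A : Finset (Sym2 V)) (h : r e ≤ r e') :
    Active r (toggle e A) e' ↔ Active r A e' := by
  have : ∀ x, r e' < r x → (x ∈ toggle e A ↔ x ∈ A) := by
    intro x hx
    refine mem_toggle_of_ne _ ?_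
    rintro rfl
    omega
  unfold Active
  refine forall_congr' fun f => imp_congr_left ?_
  exact ⟨fun H x hx hr => H x ((this x hr).2 hx) hr, fun H x hx hr => H x ((this x hr).1 hx) hr⟩

lemma monoCount_toggle [Fintype V] {r : Sym2 V → ℕ} {e : Sym2 V} {A : Finset (Sym2 V)}
    (L : V → Finset ℕ) (h : Active r A e) : monoCount L (toggle e A) = monoCount L A := by
  have key : ∀ B : Finset (Sym2 V), Active r B e → ∀ f : V → ℕ, (∀ x ∈ B, Mono f x) →
      ∀ x ∈ toggle e B, Mono f x := by
    intro B hB f hf x hx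
    by_cases hxe : x = e
    · exact hxe ▸ hB f fun y hy _ => hf y hy
    · exact hf x ((mem_toggle_of_ne _ hxe).1 hx)
  unfold monoCount
  congr 1
  refine filter_congr fun f _ => ⟨fun H => ?_, key A h f⟩
  have := key (toggle e A) ((active_toggle A le_rfl).2 h) f H
  rwa [toggle_toggle] at this

/-- Whitney's broken-cycle theorem for list colorings. -/
lemma listP_eq_sum [Fintype V] (G : SimpleGraph V) (E : Finset (Sym2 V))
    (hE : ∀ u v, s(u, v) ∈ E ↔ G.Adj u v) (r : Sym2 V → ℕ) (hr : Function.Injective r)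
    (L : V → Finset ℕ) :
    (listP G L : ℚ) = ∑ A ∈ unbroken r E, (-1) ^ #A * (monoCount L A : ℚ) := by
  rw [listP_eq_sum_powerset G E hE, unbroken,
    ← sum_filter_add_sum_filter_not E.powerset (fun A => ∀ e ∈ E, ¬ Active r A e), add_eq_left]
  -- the toggled edge is the active edge of largest rank
  have hmax : ∀ A ∈ {A ∈ E.powerset | ¬ ∀ e ∈ E, ¬ Active r A e},
      ∃ e ∈ E, Active r A e ∧ ∀ e' ∈ E, Active r A e' → r e' ≤ r e := by
    intro A hA
    obtain ⟨e₀, he₀, ha₀⟩ : ∃ e ∈ E, Active r A e := by simpa using (mem_filter.1 hA).2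
    obtain ⟨e, he, hm⟩ := exists_max_image {e ∈ E | Active r A e} r ⟨e₀, by simp [he₀, ha₀]⟩
    simp only [mem_filter] at he hm
    exact ⟨e, he.1, he.2, fun e' h1 h2 => hm e' ⟨h1, h2⟩⟩
  rcases isEmpty_or_nonempty (Sym2 V) with hV | hV
  · exact sum_eq_zero fun A hA => hV.elim (hmax A hA).choose
  choose! t htE htA htm using hmax
  have hmem : ∀ A ∈ {A ∈ E.powerset | ¬ ∀ e ∈ E, ¬ Active r A e},
      toggle (t A) A ∈ {A ∈ E.powerset | ¬ ∀ e ∈ E, ¬ Active r A e} := by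
    intro A hA
    have hAE := mem_powerset.1 (mem_filter.1 hA).1
    refine mem_filter.2 ⟨mem_powerset.2 fun x hx => ?_, fun H => ?_⟩
    · by_cases hxe : x = t A
      · exact hxe ▸ htE A hA
      · exact hAE ((mem_toggle_of_ne _ hxe).1 hx)
    · exact H _ (htE A hA) ((active_toggle A le_rfl).2 (htA A hA))
  refine sum_involution (fun A _ => toggle (t A) A) ?_ ?_ hmem ?_
  · intro A hA
    rw [neg_one_pow_card_toggle, monoCount_toggle L (htA A hA)]
    ring
  · intro A hA _ h
    have := mem_toggle_self (t A) A
    rw [h] at this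
    tauto
  · intro A hA
    have hB := hmem A hA
    have : t (toggle (t A) A) = t A := by
      apply hr
      apply le_antisymm
      · by_contra! hlt
        exact absurd (htm A hA _ (htE _ hB) ((active_toggle A hlt.le).1 (htA _ hB))) (by omega)
      · exact htm _ hB _ (htE A hA) ((active_toggle A le_rfl).2 (htA A hA))
    rw [this, toggle_toggle]

lemma unbroken_mono [Fintype V] {r : Sym2 V → ℕ} {E A B : Finset (Sym2 V)}
    (hA : A ∈ unbroken r E) (hB : B ⊆ A) : B ∈ unbroken r E := by
  simp only [unbroken, mem_filter, mem_powerset] at hA ⊢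
  exact ⟨hB.trans hA.1, fun e he h => hA.2 e he fun f hf => h f fun x hx => hf x (hB hx)⟩

lemma singleton_mem_unbroken [Fintype V] {r : Sym2 V → ℕ} {E : Finset (Sym2 V)}
    (hE : ∀ e ∈ E, ¬ e.IsDiag) {e : Sym2 V} (he : e ∈ E) : {e} ∈ unbroken r E := by
  simp only [unbroken, mem_filter, mem_powerset, singleton_subset_iff]
  refine ⟨he, fun e' he' h => ?_⟩
  have hd := hE e' he'
  induction e with | _ a b
  induction e' with | _ c d
  simp only [Sym2.mk_isDiag_iff] at hd
  simp only [Active, mem_singleton, forall_eq, mono_mk] at h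
  by_cases heq : s(c, d) = s(a, b)
  · obtain ⟨g, hg⟩ := exists_injective_nat V
    exact hd (hg (h g fun hlt => absurd hlt (by rw [heq]; exact lt_irrefl _)))
  · -- an end of one edge that is not an end of the other separates the two edges
    have hc := h fun x => if x = c then 1 else 0
    have hd' := h fun x => if x = d then 1 else 0
    have hdc : d ≠ c := Ne.symm hd
    simp only [if_true, if_neg hd, if_neg hdc] at hc hd'
    have h1 : ¬ ((if a = c then 1 else 0) = (if b = c then 1 else 0)) := fun H => by
      simpa using hc fun _ => H
    have h2 : ¬ ((if a = d then 1 else 0) = (if b = d then 1 else 0)) := fun H => by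
      simpa using hd' fun _ => H
    apply heq
    rw [Sym2.eq_iff]
    by_cases p1 : a = c <;> by_cases p2 : b = c <;> by_cases p3 : a = d <;>
      by_cases p4 : b = d <;> simp_all

/-! ### Colorings constant on a forest -/

/-- The colors common to all lists of the class `{v | φ v = x}`, provided that `x` belongs to it. -/
noncomputable def common [Fintype V] (L : V → Finset ℕ) (φ : V → V) (x : V) : Finset ℕ :=
  {c ∈ L x | ∀ v, φ v = x → c ∈ L v}

/-- `φ` sends each vertex to the representative of its component in the graph with edge set `A`, and
`R` is the set of representatives. -/
structure IsRep (A : Finset (Sym2 V)) (R : Finset V) (φ : V → V) : Prop where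
  mem : ∀ v, φ v ∈ R
  fix : ∀ x ∈ R, φ x = x
  mono : ∀ e ∈ A, Mono φ e
  comp : ∀ f : V → ℕ, (∀ e ∈ A, Mono f e) → ∀ v, f (φ v) = f v

lemma monoCount_eq_prod [Fintype V] {A : Finset (Sym2 V)} {R : Finset V} {φ : V → V}
    (h : IsRep A R φ) (L : V → Finset ℕ) : monoCount L A = ∏ x ∈ R, #(common L φ x) := by
  rw [monoCount, ← card_pi]
  refine card_bij' (fun f _ x _ => f x) (fun g _ v => g (φ v) (h.mem v)) ?_ ?_ ?_ ?_
  · intro f hf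
    simp only [mem_filter, Fintype.mem_piFinset] at hf
    simp only [mem_pi, common, mem_filter]
    refine fun x hx => ⟨hf.1 x, fun v hv => ?_⟩
    rw [← hv, h.comp f hf.2]
    exact hf.1 v
  · intro g hg
    simp only [mem_pi, common, mem_filter] at hg
    simp only [mem_filter, Fintype.mem_piFinset]
    refine ⟨fun v => (hg _ (h.mem v)).2 v rfl, fun e he => ?_⟩
    have := h.mono e he
    induction e with | _ a b
    simp only [mono_mk] at this ⊢
    congr 1
  · intro f hf
    funext v
    exact h.comp f (mem_filter.1 hf).2 v
  · intro g hg
    funext x hx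
    have := h.fix x hx
    simp only
    congr 1

/-- Joining two components by an edge `uv` loses at most `defect L k s(u, v)` more colors than the
two components together. -/
lemma card_common_merge {L : V → Finset ℕ} {k : ℕ} (hL : ∀ v, #(L v) = k) (u v : V)
    {B C : Finset ℕ} (hB : B ⊆ L u) (hC : C ⊆ L v) :
    (k : ℚ) - #(B ∩ C) ≤ (k - #B) + (k - #C) + defect L k s(u, v) := by
  have h1 := card_union_add_card_inter B C
  have h2 := card_union_add_card_inter (L u) (L v)
  have h3 := card_le_card (union_subset_union hB hC)
  rw [hL, hL] at h2
  rw [defect_mk]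
  have h1' : (#(B ∪ C) : ℚ) + #(B ∩ C) = #B + #C := by exact_mod_cast h1
  have h2' : (#(L u ∪ L v) : ℚ) + #(L u ∩ L v) = k + k := by exact_mod_cast h2
  have h3' : (#(B ∪ C) : ℚ) ≤ #(L u ∪ L v) := by exact_mod_cast h3
  linarith

/-- An unbroken set `A` is a forest with `n - |A|` components, and the components lose in total at
most `∑ e ∈ A, defect L k e` colors. -/
lemma exists_isRep [Fintype V] {r : Sym2 V → ℕ} (hr : Function.Injective r) {E : Finset (Sym2 V)}
    {L : V → Finset ℕ} {k : ℕ} (hL : ∀ v, #(L v) = k) (A : Finset (Sym2 V))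
    (hA : A ∈ unbroken r E) :
    ∃ R φ, IsRep A R φ ∧ #R + #A = Fintype.card V ∧
      ∑ x ∈ R, ((k : ℚ) - #(common L φ x)) ≤ ∑ e ∈ A, defect L k e := by
  induction hs : #A generalizing A with
  | zero =>
    rw [card_eq_zero] at hs
    subst hs
    refine ⟨univ, id, ⟨by simp, by simp, by simp, by simp⟩, by simp, ?_⟩
    have : ∀ x, common L id x = L x := by
      intro x; ext c; simp [common]
    simp [this, hL]
  | succ j ih =>
    -- the edge of smallest rank joins two components of the other edges
    obtain ⟨e, heA, hmin⟩ := exists_min_image A r (card_pos.1 (by omega))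
    obtain ⟨R, φ, hφ, hcard, hsum⟩ := ih (A.erase e) (unbroken_mono hA (erase_subset _ _))
      (by rw [card_erase_of_mem heA]; omega)
    have hA' := mem_filter.1 hA
    have hna := hA'.2 e (mem_powerset.1 hA'.1 heA)
    rw [Active] at hna
    push Not at hna
    obtain ⟨f, hf, hfe⟩ := hna
    have hf' : ∀ x ∈ A.erase e, Mono f x := by
      intro x hx
      rw [mem_erase] at hx
      exact hf x hx.2 (lt_of_le_of_ne (hmin x hx.2) fun h => hx.1 (hr h).symm)
    rw [← add_sum_erase A _ heA]
    induction e with | _ u v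
    have hne : φ u ≠ φ v := by
      intro h
      apply hfe
      rw [mono_mk, ← hφ.comp f hf' u, h, hφ.comp f hf' v]
    let ψ : V → V := fun w => if φ w = φ u then φ v else φ w
    have hψu : ∀ w, φ w = φ u → ψ w = φ v := fun w h => by simp [ψ, h]
    have hψn : ∀ w, φ w ≠ φ u → ψ w = φ w := fun w h => by simp [ψ, h]
    have hψv : ψ v = φ v := hψn v hne.symm
    have hfu := hφ.fix _ (hφ.mem u)
    have hfv := hφ.fix _ (hφ.mem v)
    refine ⟨R.erase (φ u), ψ, ⟨?_, ?_, ?_, ?_⟩, ?_, ?_⟩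
    · intro w
      by_cases h : φ w = φ u
      · rw [hψu w h]; exact mem_erase.2 ⟨hne.symm, hφ.mem v⟩
      · rw [hψn w h]; exact mem_erase.2 ⟨h, hφ.mem w⟩
    · intro x hx
      rw [mem_erase] at hx
      have := hφ.fix x hx.2
      rw [hψn x (by rw [this]; exact hx.1), this]
    · intro x hx
      by_cases hxe : x = s(u, v)
      · subst hxe
        rw [mono_mk, hψu u rfl, hψv]
      · have := hφ.mono x (mem_erase.2 ⟨hxe, hx⟩)
        induction x with | _ a b
        rw [mono_mk] at this ⊢
        simp only [ψ, this]
    · intro g hg w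
      have hg' : ∀ x ∈ A.erase s(u, v), Mono g x := fun x hx => hg x (mem_of_mem_erase hx)
      have hguv : g u = g v := by simpa using hg _ heA
      by_cases h : φ w = φ u
      · rw [hψu w h, hφ.comp g hg', ← hguv, ← hφ.comp g hg' u, ← h, hφ.comp g hg']
      · rw [hψn w h, hφ.comp g hg']
    · have := card_erase_add_one (hφ.mem u)
      omega
    · have hvR : φ v ∈ R.erase (φ u) := mem_erase.2 ⟨hne.symm, hφ.mem v⟩
      rw [← add_sum_erase R _ (hφ.mem u), ← add_sum_erase _ _ hvR] at hsum
      rw [← add_sum_erase _ _ hvR]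
      have hrest : ∑ x ∈ (R.erase (φ u)).erase (φ v), ((k : ℚ) - #(common L ψ x))
          = ∑ x ∈ (R.erase (φ u)).erase (φ v), ((k : ℚ) - #(common L φ x)) := by
        refine sum_congr rfl fun x hx => ?_
        simp only [mem_erase] at hx
        have : common L ψ x = common L φ x := by
          unfold common
          refine filter_congr fun c _ => forall_congr' fun w => imp_congr_left ?_
          by_cases h : φ w = φ u
          · rw [hψu w h, h]
            exact ⟨fun h' => absurd h'.symm hx.1, fun h' => absurd h'.symm hx.2.1⟩
          · rw [hψn w h]
        rw [this]
      have hmerge : common L ψ (φ v) = common L φ (φ u) ∩ common L φ (φ v) := by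
        ext c
        simp only [common, mem_filter, mem_inter]
        constructor
        · rintro ⟨h1, h2⟩
          have h3 : ∀ w, φ w = φ u → c ∈ L w := fun w hw => h2 w (hψu w hw)
          exact ⟨⟨h3 _ hfu, h3⟩, h1, fun w hw =>
            h2 w (by rw [hψn w (by rw [hw]; exact hne.symm), hw])⟩
        · rintro ⟨⟨_, h2⟩, h3, h4⟩
          refine ⟨h3, fun w hw => ?_⟩
          by_cases h : φ w = φ u
          · exact h2 w h
          · exact h4 w (by rw [← hw, hψn w h])
      have hmain := card_common_merge hL u v (B := common L φ (φ u)) (C := common L φ (φ v))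
        (fun c hc => (mem_filter.1 hc).2 u rfl) (fun c hc => (mem_filter.1 hc).2 v rfl)
      rw [hrest, hmerge]
      linarith

/-- A first-order Bernoulli-type bound for a product of factors in `[0, k]`. -/
lemma pow_sub_prod_le {ι : Type*} (s : Finset ι) (b : ι → ℚ) {k : ℚ} (hk : 0 < k)
    (h0 : ∀ i ∈ s, 0 ≤ b i) (h1 : ∀ i ∈ s, b i ≤ k) :
    k ^ #s - ∏ i ∈ s, b i ≤ k ^ #s / k * ∑ i ∈ s, (k - b i) := by
  induction s using Finset.induction_on with
  | empty => simp
  | insert a s ha ih =>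
    rw [card_insert_of_notMem ha, prod_insert ha, sum_insert ha]
    have ih' := ih (fun i hi => h0 i (mem_insert_of_mem hi)) fun i hi => h1 i (mem_insert_of_mem hi)
    have hQ : ∏ i ∈ s, b i ≤ k ^ #s := by
      rw [← prod_const]
      exact prod_le_prod (fun i hi => h0 i (mem_insert_of_mem hi))
        fun i hi => h1 i (mem_insert_of_mem hi)
    have ha1 := h1 a (mem_insert_self _ _)
    have e1 : k ^ (#s + 1) / k = k ^ #s := by rw [pow_succ]; field_simp
    have ih2 : k * (k ^ #s - ∏ i ∈ s, b i) ≤ k ^ #s * ∑ i ∈ s, (k - b i) := by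
      calc _ ≤ k * (k ^ #s / k * ∑ i ∈ s, (k - b i)) := by gcongr
        _ = _ := by field_simp
    rw [e1, pow_succ]
    nlinarith [mul_le_mul_of_nonneg_right hQ (sub_nonneg.2 ha1)]

lemma prod_le_pow_mul {ι : Type*} (s : Finset ι) (b : ι → ℚ) {k : ℚ} (hk : 0 < k)
    (h0 : ∀ i ∈ s, 0 ≤ b i) (h1 : ∀ i ∈ s, b i ≤ k) {i : ι} (hi : i ∈ s) :
    ∏ i ∈ s, b i ≤ k ^ #s / k * b i := by
  rw [← mul_prod_erase s b hi, mul_comm]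
  have : ∏ i ∈ s.erase i, b i ≤ k ^ #(s.erase i) := by
    rw [← prod_const]
    exact prod_le_prod (fun j hj => h0 j (mem_of_mem_erase hj)) fun j hj => h1 j (mem_of_mem_erase hj)
  have e : k ^ #s / k = k ^ #(s.erase i) := by
    rw [← card_erase_add_one hi, pow_succ]; field_simp
  rw [e]
  exact mul_le_mul_of_nonneg_right this (h0 i hi)

/-- How many more colorings constant on `A` there are for the constant lists `{0, …, k - 1}` than
for `L`. -/
noncomputable def deficit [Fintype V] (L : V → Finset ℕ) (k : ℕ) (A : Finset (Sym2 V)) : ℚ :=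
  (monoCount (fun _ => range k) A : ℚ) - monoCount L A

lemma deficit_eq [Fintype V] {r : Sym2 V → ℕ} (hr : Function.Injective r)
    {E : Finset (Sym2 V)} {L : V → Finset ℕ} {k : ℕ} (hk : 0 < k) (hL : ∀ v, #(L v) = k)
    {A : Finset (Sym2 V)} (hA : A ∈ unbroken r E) :
    ∃ R φ, IsRep A R φ ∧ (k : ℚ) ^ #R = k ^ Fintype.card V / k ^ #A ∧
      ∑ x ∈ R, ((k : ℚ) - #(common L φ x)) ≤ ∑ e ∈ A, defect L k e ∧
      deficit L k A = (k : ℚ) ^ #R - ∏ x ∈ R, (#(common L φ x) : ℚ) := by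
  obtain ⟨R, φ, hφ, hcard, hsum⟩ := exists_isRep hr hL A hA
  have hk' : (k : ℚ) ≠ 0 := by positivity
  refine ⟨R, φ, hφ, ?_, hsum, ?_⟩
  · rw [← hcard, pow_add]; field_simp
  · rw [deficit, monoCount_eq_prod hφ, monoCount_eq_prod hφ]
    have : ∀ x, #(common (fun _ => range k) φ x) = k := by
      intro x
      have : common (fun _ => range k) φ x = range k := by
        ext c; simp only [common, mem_filter]; exact ⟨fun h => h.1, fun h => ⟨h, fun _ _ => h⟩⟩
      rw [this, card_range]
    simp [this]

lemma deficit_le [Fintype V] {r : Sym2 V → ℕ} (hr : Function.Injective r)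
    {E : Finset (Sym2 V)} {L : V → Finset ℕ} {k : ℕ} (hk : 0 < k) (hL : ∀ v, #(L v) = k)
    {A : Finset (Sym2 V)} (hA : A ∈ unbroken r E) :
    deficit L k A ≤ k ^ Fintype.card V / k ^ (#A + 1) * ∑ e ∈ A, defect L k e := by
  obtain ⟨R, φ, hφ, hR, hsum, hD⟩ := deficit_eq hr hk hL hA
  have hk' : (0 : ℚ) < k := by positivity
  rw [hD]
  refine (pow_sub_prod_le R (fun x => (#(common L φ x) : ℚ)) hk' (by simp) fun x _ => ?_).trans ?_
  · exact_mod_cast (card_le_card (filter_subset _ _)).trans (hL x).le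
  · rw [hR, div_div, ← pow_succ]
    gcongr

lemma le_deficit [Fintype V] {r : Sym2 V → ℕ} (hr : Function.Injective r)
    {E : Finset (Sym2 V)} {L : V → Finset ℕ} {k : ℕ} (hk : 0 < k) (hL : ∀ v, #(L v) = k)
    {A : Finset (Sym2 V)} (hA : A ∈ unbroken r E)
    {e : Sym2 V} (he : e ∈ A) :
    k ^ Fintype.card V / k ^ (#A + 1) * defect L k e ≤ deficit L k A := by
  obtain ⟨R, φ, hφ, hR, hsum, hD⟩ := deficit_eq hr hk hL hA
  have hk' : (0 : ℚ) < k := by positivity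
  have hm := hφ.mono e he
  induction e with | _ u v
  rw [mono_mk] at hm
  have h1 : #(common L φ (φ u)) ≤ #(L u ∩ L v) := by
    refine card_le_card fun c hc => ?_
    have := (mem_filter.1 hc).2
    exact mem_inter.2 ⟨this u rfl, this v hm.symm⟩
  have h1' : (#(common L φ (φ u)) : ℚ) ≤ #(L u ∩ L v) := by exact_mod_cast h1
  have h2 := prod_le_pow_mul R (fun x => (#(common L φ x) : ℚ)) hk' (by simp)
    (fun x _ => by exact_mod_cast (card_le_card (filter_subset _ _)).trans (hL x).le) (hφ.mem u)
  have h3 : (k : ℚ) ^ #R / k * #(common L φ (φ u)) ≤ (k : ℚ) ^ #R / k * #(L u ∩ L v) := by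
    gcongr
  have e1 : (k : ℚ) ^ Fintype.card V / k ^ (#A + 1) = (k : ℚ) ^ #R / k := by
    rw [hR, div_div, ← pow_succ]
  have e2 : (k : ℚ) ^ #R / k * k = (k : ℚ) ^ #R := by field_simp
  rw [hD, e1, defect_mk, mul_sub, e2]
  linarith

lemma deficit_nonneg [Fintype V] {r : Sym2 V → ℕ} (hr : Function.Injective r)
    {E : Finset (Sym2 V)} {L : V → Finset ℕ} {k : ℕ} (hk : 0 < k) (hL : ∀ v, #(L v) = k)
    {A : Finset (Sym2 V)} (hA : A ∈ unbroken r E) : 0 ≤ deficit L k A := by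
  obtain ⟨R, φ, hφ, hR, hsum, hD⟩ := deficit_eq hr hk hL hA
  rw [hD, sub_nonneg, ← prod_const]
  exact prod_le_prod (by simp) fun x _ => by
    exact_mod_cast (card_le_card (filter_subset _ _)).trans (hL x).le

end

/-! ### Sums over the levels of a simplicial complex -/

/-- Both sides compare with the sum of `∑ e ∈ B \ {x}, a e` over pairs `x ∈ B`, `|B| = j + 1`: each
`B` is counted `j` times, and each `B \ {x}` arises from at most `|E| - 1` elements `x`. -/
lemma level_double_count {ε : Type*} [DecidableEq ε] (E : Finset ε) (F : Finset (Finset ε))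
    (hFE : ∀ A ∈ F, A ⊆ E) (hF : ∀ A ∈ F, ∀ B ⊆ A, B ∈ F) (a : ε → ℚ) (ha : ∀ e, 0 ≤ a e)
    {j : ℕ} (hj : 1 ≤ j) :
    (j : ℚ) * ∑ B ∈ F with #B = j + 1, ∑ e ∈ B, a e
      ≤ ((#E : ℚ) - 1) * ∑ A ∈ F with #A = j, ∑ e ∈ A, a e := by
  have h1 : (j : ℚ) * ∑ B ∈ F with #B = j + 1, ∑ e ∈ B, a e
      = ∑ p ∈ ({B ∈ F | #B = j + 1}).sigma fun B => B, ∑ e ∈ p.1.erase p.2, a e := by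
    rw [sum_sigma, mul_sum]
    refine sum_congr rfl fun B hB => ?_
    have : ∀ x ∈ B, ∑ e ∈ B.erase x, a e = ∑ e ∈ B, a e - a x := fun x hx => by
      rw [← add_sum_erase B a hx]; ring
    simp only
    rw [sum_congr rfl this, sum_sub_distrib, sum_const, (mem_filter.1 hB).2]
    simp only [nsmul_eq_mul]
    push_cast
    ring
  have h2 : ∑ p ∈ ({B ∈ F | #B = j + 1}).sigma fun B => B, ∑ e ∈ p.1.erase p.2, a e
      ≤ ∑ p ∈ ({A ∈ F | #A = j}).sigma fun A => E \ A, ∑ e ∈ p.1, a e := by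
    rw [← sum_image (s := ({B ∈ F | #B = j + 1}).sigma fun B => B)
      (g := fun p => (⟨p.1.erase p.2, p.2⟩ : (_ : Finset ε) × ε)) (f := fun p => ∑ e ∈ p.1, a e)]
    · refine sum_le_sum_of_subset_of_nonneg ?_ fun p _ _ => sum_nonneg fun e _ => ha e
      intro p hp
      obtain ⟨⟨B, x⟩, hq, rfl⟩ := mem_image.1 hp
      simp only [mem_sigma, mem_filter] at hq
      simp only [mem_sigma, mem_filter, mem_sdiff, mem_erase, ne_eq, not_true_eq_false, false_and,
        not_false_eq_true, and_true]
      exact ⟨⟨hF B hq.1.1 _ (erase_subset _ _), by rw [card_erase_of_mem hq.2, hq.1.2]; rfl⟩,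
        hFE B hq.1.1 hq.2⟩
    · rintro ⟨B, x⟩ hB ⟨C, y⟩ hC h
      simp only [coe_sigma, Set.mem_sigma_iff, mem_coe] at hB hC
      simp only [Sigma.mk.injEq, heq_eq_eq] at h
      obtain ⟨h, rfl⟩ := h
      have : B = C := by rw [← insert_erase hB.2, h, insert_erase hC.2]
      rw [this]
  have h3 : ∑ p ∈ ({A ∈ F | #A = j}).sigma fun A => E \ A, ∑ e ∈ p.1, a e
      ≤ ((#E : ℚ) - 1) * ∑ A ∈ F with #A = j, ∑ e ∈ A, a e := by
    rw [sum_sigma, mul_sum]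
    refine sum_le_sum fun A hA => ?_
    rw [mem_filter] at hA
    simp only [sum_const, nsmul_eq_mul]
    refine mul_le_mul_of_nonneg_right ?_ (sum_nonneg fun e _ => ha e)
    have := card_sdiff_add_card_eq_card (hFE A hA.1)
    rw [hA.2] at this
    have h4 : (#(E \ A) : ℚ) + j = #E := by exact_mod_cast this
    have h5 : (1 : ℚ) ≤ j := by exact_mod_cast hj
    linarith
  linarith

lemma alternating_sum_bounds (N : ℕ) (T : ℕ → ℚ) (h0 : ∀ j, 0 ≤ T j) (h1 : ∀ j, T (j + 1) ≤ T j) :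
    0 ≤ ∑ j ∈ range N, (-1) ^ j * T j ∧ ∑ j ∈ range N, (-1) ^ j * T j ≤ T 0 := by
  induction N generalizing T with
  | zero => simpa using h0 0
  | succ N ih =>
    have := ih (fun j => T (j + 1)) (fun j => h0 _) fun j => h1 _
    have e : ∑ j ∈ range (N + 1), (-1) ^ j * T j
        = T 0 - ∑ j ∈ range N, (-1) ^ j * T (j + 1) := by
      rw [sum_range_succ', add_comm, sub_eq_add_neg, ← sum_neg_distrib]
      congr 1
      · simp
      · exact sum_congr rfl fun j _ => by ring
    have h := h1 0
    simp only [zero_add] at this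
    constructor <;> linarith

/-- The lower bound over `ℚ`, with `k ^ (n - 3)` written as `k ^ n / k ^ 3`. -/
lemma main_bound {V : Type*} [Fintype V] (G : SimpleGraph V) (E : Finset (Sym2 V))
    (hE : ∀ u v, s(u, v) ∈ E ↔ G.Adj u v) {k : ℕ} (hk : 0 < k) (hEk : #E ≤ k + 1)
    (L : V → Finset ℕ) (hL : ∀ v, #(L v) = k) :
    (k : ℚ) ^ Fintype.card V / k ^ 3 * (k + 1 - #E) * ∑ e ∈ E, defect L k e
      ≤ (listP G L : ℚ) - listP G (fun _ => range k) := by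
  classical
  obtain ⟨r, hr⟩ := exists_injective_nat (Sym2 V)
  have hk' : (0 : ℚ) < k := by positivity
  have hEk' : (#E : ℚ) ≤ k + 1 := by exact_mod_cast hEk
  have hloop : ∀ e ∈ E, ¬ e.IsDiag := by
    intro e he
    induction e with | _ u v
    simpa using ((hE u v).1 he).ne
  set F := unbroken r E with hFdef
  have hFE : ∀ A ∈ F, A ⊆ E := fun A hA => mem_powerset.1 (mem_filter.1 hA).1
  set c : ℕ → ℚ := fun j => k ^ Fintype.card V / k ^ (j + 1) with hc
  have hcpos : ∀ j, 0 ≤ c j := fun j => by positivity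
  have hcs : ∀ j, c j = k * c (j + 1) := fun j => by
    simp only [hc, pow_succ]; field_simp
  set T : ℕ → ℚ := fun j => ∑ A ∈ F with #A = j, deficit L k A with hT
  set U : ℕ → ℚ := fun j => ∑ A ∈ F with #A = j, ∑ e ∈ A, defect L k e with hU
  have hU0 : ∀ j, 0 ≤ U j := fun j =>
    sum_nonneg fun A _ => sum_nonneg fun e _ => defect_nonneg hL e
  have hT0 : ∀ j, 0 ≤ T j := fun j =>
    sum_nonneg fun A hA => deficit_nonneg hr hk hL (mem_filter.1 hA).1
  have hTU : ∀ j, T j ≤ c j * U j := by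
    intro j
    simp only [hT, hU, mul_sum (s := {A ∈ F | #A = j})]
    refine sum_le_sum fun A hA => ?_
    rw [mem_filter] at hA
    have := deficit_le hr hk hL hA.1
    rwa [hA.2] at this
  have hUT : ∀ j, c j * U j ≤ j * T j := by
    intro j
    simp only [hT, hU, mul_sum (s := {A ∈ F | #A = j})]
    refine sum_le_sum fun A hA => ?_
    rw [mem_filter] at hA
    have := sum_le_sum fun e (he : e ∈ A) => le_deficit hr hk hL hA.1 he
    rw [← mul_sum, sum_const, nsmul_eq_mul, hA.2] at this
    exact this
  have hUU : ∀ j : ℕ, 1 ≤ j → (j : ℚ) * U (j + 1) ≤ ((#E : ℚ) - 1) * U j := fun j hj =>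
    level_double_count E F hFE (fun A hA B hB => unbroken_mono hA hB) _ (defect_nonneg hL) hj
  have hTanti : ∀ j, 1 ≤ j → T (j + 1) ≤ T j := by
    intro j hj
    have hj' : (0 : ℚ) < j := by exact_mod_cast hj
    have h1 : (j : ℚ) * U (j + 1) ≤ k * U j :=
      (hUU j hj).trans (mul_le_mul_of_nonneg_right (by linarith) (hU0 j))
    have h2 : (j : ℚ) * T (j + 1) ≤ j * T j := by
      calc (j : ℚ) * T (j + 1) ≤ j * (c (j + 1) * U (j + 1)) := by gcongr; exact hTU _
        _ = c (j + 1) * (j * U (j + 1)) := by ring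
        _ ≤ c (j + 1) * (k * U j) := mul_le_mul_of_nonneg_left h1 (hcpos _)
        _ = c j * U j := by rw [hcs j]; ring
        _ ≤ j * T j := hUT j
    exact le_of_mul_le_mul_left h2 hj'
  have hTzero : T 0 = 0 := by
    refine le_antisymm ?_ (hT0 0)
    have := hTU 0
    have hz : U 0 = 0 := by
      refine sum_eq_zero fun A hA => ?_
      rw [card_eq_zero.1 (mem_filter.1 hA).2, sum_empty]
    rwa [hz, mul_zero] at this
  have hU1 : U 1 = ∑ e ∈ E, defect L k e := by
    have : {A ∈ F | #A = 1} = E.image fun e => ({e} : Finset (Sym2 V)) := by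
      ext A
      simp only [mem_filter, mem_image, card_eq_one]
      constructor
      · rintro ⟨h, e, rfl⟩
        exact ⟨e, hFE _ h (mem_singleton_self e), rfl⟩
      · rintro ⟨e, he, rfl⟩
        exact ⟨singleton_mem_unbroken hloop he, e, rfl⟩
    simp only [hU, this]
    rw [sum_image (by simp)]
    simp
  have hdiff : (listP G L : ℚ) - listP G (fun _ => range k)
      = - ∑ j ∈ range (#E + 3), (-1) ^ j * T j := by
    rw [listP_eq_sum G E hE r hr, listP_eq_sum G E hE r hr, ← sum_sub_distrib,
      ← sum_neg_distrib,
      ← sum_fiberwise_of_maps_to (s := F) (t := range (#E + 3)) (g := fun A => #A)]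
    · refine sum_congr rfl fun j _ => ?_
      rw [hT, mul_sum, ← sum_neg_distrib]
      refine sum_congr rfl fun A hA => ?_
      rw [(mem_filter.1 hA).2, deficit]
      ring
    · intro A hA
      have := card_le_card (hFE A hA)
      rw [mem_range]
      omega
  rw [hdiff, sum_range_succ', sum_range_succ', sum_range_succ', hTzero]
  have htail := (alternating_sum_bounds #E (fun j => T (j + 3)) (fun j => hT0 _)
    fun j => hTanti (j + 3) (by omega)).1
  have htail' : ∑ j ∈ range #E, (-1 : ℚ) ^ (j + 1 + 1 + 1) * T (j + 1 + 1 + 1)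
      = - ∑ j ∈ range #E, (-1) ^ j * T (j + 3) := by
    rw [← sum_neg_distrib]
    exact sum_congr rfl fun j _ => by ring_nf
  rw [htail', ← hU1]
  have h1 := hUT 1
  have h2 := hTU 2
  have h3 := mul_le_mul_of_nonneg_left (hUU 1 le_rfl) (hcpos 2)
  rw [hcs 1] at h1
  have h4 : (k : ℚ) ^ Fintype.card V / k ^ 3 = c 2 := rfl
  rw [h4]
  norm_num at h1 h3 ⊢
  nlinarith

lemma chromP_eq {V : Type*} (G : SimpleGraph V) (k : ℕ) :
    chromP G k = listP G (fun _ => range k) := by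
  refine Nat.card_congr
    { toFun := fun f => ⟨fun v => f.1 v, fun u v h => by simpa [Fin.val_inj] using f.2 h, by simp⟩
      invFun := fun f => ⟨fun v => ⟨f.1 v, mem_range.1 (f.2.2 v)⟩, fun u v h => by
        simpa using f.2.1 h⟩
      left_inv := fun f => rfl
      right_inv := fun f => rfl }

lemma sum_adj_eq {V : Type*} [Fintype V] [DecidableEq V] (G : SimpleGraph V) [DecidableRel G.Adj]
    (a : Sym2 V → ℚ) :
    ∑ u : V, ∑ v : V, (if G.Adj u v then a s(u, v) else 0) = 2 * ∑ e ∈ G.edgeFinset, a e := by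
  have h1 : ∑ d : G.Dart, a d.edge = 2 * ∑ e ∈ G.edgeFinset, a e := by
    rw [← sum_fiberwise_of_maps_to (t := G.edgeFinset) (g := fun d : G.Dart => d.edge)
      (fun d _ => by simp), mul_sum]
    refine sum_congr rfl fun e he => ?_
    rw [sum_congr rfl fun d hd => by rw [(mem_filter.1 hd).2], sum_const,
      G.dart_edge_fiber_card e (by simpa using he)]
    simp
  rw [← h1, ← sum_product', ← sum_filter]
  symm
  refine sum_bij (fun d _ => d.toProd) ?_ ?_ ?_ ?_
  · intro d _; simp
  · intro d _ d' _ h; exact SimpleGraph.Dart.ext _ _ h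
  · intro p hp; exact ⟨⟨p, by simpa using hp⟩, mem_univ _, rfl⟩
  · intro d _; rfl

end DongZhang

open DongZhang in
/-- Dong–Zhang bound, weak form.
For a finite simple graph `G` with `n` vertices and `m ≥ 4` edges, a `k`-assignment `L`
with `k ≥ m - 1`, and `S = Σ_{uv ∈ E(G)} |L(u) \ L(v)|` (each edge counted once, so
`2 * S` is the corresponding sum over ordered adjacent pairs):
`P(G,L) ≥ P(G,k) + (k - m + 1) * k^(n-3) * S`. -/
theorem statement_0 {V : Type*} [Fintype V] (G : SimpleGraph V) [DecidableRel G.Adj]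
    (n m k S : ℕ) (hn : Fintype.card V = n) (hm : Nat.card G.edgeSet = m)
    (hm4 : 4 ≤ m) (hk : m - 1 ≤ k)
    (L : V → Finset ℕ) (hL : ∀ v, (L v).card = k)
    (hS : 2 * S = ∑ u : V, ∑ v : V, if G.Adj u v then ((L u) \ (L v)).card else 0) :
    chromP G k + (k + 1 - m) * k ^ (n - 3) * S ≤ listP G L := by
  classical
  have hmE : G.edgeFinset.card = m := by
    rw [← hm, SimpleGraph.edgeFinset_card, Nat.card_eq_fintype_card]
  have hk0 : 0 < k := by omega
  have hk0' : (k : ℚ) ≠ 0 := by positivity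
  -- with at most two vertices there is at most one edge, so `n - 3` is not truncated
  have hn3 : 3 ≤ n := by
    by_contra! h
    have h1 := G.card_edgeFinset_le_card_choose_two
    rw [hmE, hn] at h1
    have h2 : n.choose 2 ≤ 1 := by interval_cases n <;> decide
    omega
  have hS' : (S : ℚ) = ∑ e ∈ G.edgeFinset, defect L k e := by
    have h1 := sum_adj_eq G (defect L k)
    have h2 : ∑ u : V, ∑ v : V, (if G.Adj u v then defect L k s(u, v) else 0) = 2 * (S : ℚ) := by
      have : (2 * (S : ℚ)) = ((2 * S : ℕ) : ℚ) := by push_cast; ring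
      rw [this, hS]
      push_cast
      refine Finset.sum_congr rfl fun u _ => Finset.sum_congr rfl fun v _ => ?_
      split_ifs
      · have := Finset.card_sdiff_add_card_inter (L u) (L v)
        rw [hL] at this
        rw [defect_mk, ← this]
        push_cast
        simp
      · rfl
    linarith
  have hmain := main_bound G G.edgeFinset (by simp) hk0 (by omega) L hL
  rw [← hS', hmE, hn, ← chromP_eq] at hmain
  have e1 : (k : ℚ) ^ n / k ^ 3 = k ^ (n - 3) := by
    rw [div_eq_iff (by positivity), ← pow_add]
    congr 1
    omega
  have e2 : ((k + 1 - m : ℕ) : ℚ) = k + 1 - m := by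
    rw [Nat.cast_sub (by omega)]
    push_cast
    ring
  rw [e1] at hmain
  have : ((chromP G k + (k + 1 - m) * k ^ (n - 3) * S : ℕ) : ℚ) ≤ (listP G L : ℚ) := by
    push_cast
    rw [e2]
    linarith
  exact_mod_cast this
end

section
/- Let G be a finite simple graph and L a k-assignment for G. Then |Aut(G)| · u_ℓ(G,L) ≥ Σ_{π ∈ Aut(G)} P(G,π,L). -/
/-- `P(G,π,L)`: the number of proper `L`-colorings `f` of `G` with `f (π v) = f v`
for every vertex `v`. -/
noncomputable def pPiL {V : Type*} (G : SimpleGraph V) (π : G ≃g G) (L : V → Finset ℕ) : ℕ :=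
  Nat.card {f : V → ℕ // (IsProper G f ∧ ∀ v, f v ∈ L v) ∧ ∀ v, f (π v) = f v}

theorem uell_rel_equivalence {V : Type*} (G : SimpleGraph V) (L : V → Finset ℕ) :
    Equivalence (fun f g : {f : V → ℕ // IsProper G f ∧ ∀ v, f v ∈ L v} =>
      ∃ π : G ≃g G, ∀ v, f.1 (π v) = g.1 v) where
  refl f := ⟨RelIso.refl _, fun _ => rfl⟩
  symm := by
    rintro f g ⟨π, h⟩
    exact ⟨π.symm, fun v => by rw [← h, RelIso.apply_symm_apply]⟩
  trans := by
    rintro f g e ⟨π, h⟩ ⟨ρ, h'⟩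
    exact ⟨ρ.trans π, fun v => by rw [RelIso.trans_apply, h, h']⟩

theorem finite_listColorings {V : Type*} [Finite V] (G : SimpleGraph V) (L : V → Finset ℕ) :
    Finite {f : V → ℕ // IsProper G f ∧ ∀ v, f v ∈ L v} :=
  Finite.of_injective (β := ∀ v, L v) (fun f v => ⟨f.1 v, f.2.2 v⟩) fun _ _ h =>
    Subtype.ext <| funext fun v => congrArg Subtype.val (congrFun h v)

/-- Lemma: lower bound for `u_ℓ(G,L)`.
For any `k`-assignment `L` for `G`:
`|Aut(G)| * u_ℓ(G,L) ≥ Σ_{π ∈ Aut(G)} P(G,π,L)`. -/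
theorem statement_3 {V : Type*} [Fintype V] (G : SimpleGraph V)
    [Fintype (G ≃g G)] (k : ℕ) (L : V → Finset ℕ) (hL : ∀ v, (L v).card = k) :
    ∑ π : G ≃g G, pPiL G π L ≤ Nat.card (G ≃g G) * uell G L := by
  have hfin := finite_listColorings G L
  have hfix : ∀ π : G ≃g G,
      Finite {f : V → ℕ // (IsProper G f ∧ ∀ v, f v ∈ L v) ∧ ∀ v, f (π v) = f v} := fun π =>
    Finite.of_injective
      (β := {f : V → ℕ // IsProper G f ∧ ∀ v, f v ∈ L v}) (fun f => ⟨f.1, f.2.1⟩)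
      fun _ _ h => Subtype.ext (Subtype.mk.inj h)
  unfold pPiL uell
  set r := fun f g : {f : V → ℕ // IsProper G f ∧ ∀ v, f v ∈ L v} =>
    ∃ π : G ≃g G, ∀ v, f.1 (π v) = g.1 v with hr
  have hσ : ∀ f, ∃ π : G ≃g G, ∀ v, (Quot.out (Quot.mk r f)).1 (π v) = f.1 v := fun f =>
    ((uell_rel_equivalence G L).quot_mk_eq_iff _ _).1 (Quot.out_eq (Quot.mk r f))
  choose σ hσ using hσ
  rw [← Nat.card_sigma, ← Nat.card_prod]
  refine Nat.card_le_card_of_injective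
    (fun p => (p.1.trans (σ ⟨p.2.1, p.2.2.1⟩), Quot.mk r ⟨p.2.1, p.2.2.1⟩)) ?_
  rintro ⟨π, f, hf, hfπ⟩ ⟨ρ, g, hg, hgρ⟩ h
  obtain ⟨h₁, h₂⟩ := Prod.mk.inj h
  dsimp only at h₁ h₂
  have hpt : ∀ v, σ ⟨f, hf⟩ (π v) = σ ⟨g, hg⟩ (ρ v) := fun v => DFunLike.congr_fun h₁ v
  have hfg : f = g := by
    funext v
    have e₁ := hσ ⟨f, hf⟩ (π v)
    have e₂ := hσ ⟨g, hg⟩ (ρ v)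
    rw [hpt, h₂] at e₁
    exact (hfπ v).symm.trans ((e₁.symm.trans e₂).trans (hgρ v))
  subst hfg
  have hπρ : π = ρ := RelIso.ext fun v => (σ ⟨f, hf⟩).injective (hpt v)
  subst hπρ
  rfl
end

section
/- Let G₁ and G₂ be connected finite simple graphs that are not isomorphic, and let G be their disjoint union. Then for every k ∈ ℕ, the minimum of u_ℓ(G,L) over all k-assignments L for G equals the product of the minimum of u_ℓ(G₁,L₁) over all k-assignments L₁ for G₁ and the minimum of u_ℓ(G₂,L₂) over all k-assignments L₂ for G₂. -/
open SimpleGraph in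
/-- A homomorphism from a connected graph to a disjoint sum lands in a single summand. -/
lemma isLeft_const {V A B : Type*} {G : SimpleGraph V} {H : SimpleGraph A} {K : SimpleGraph B}
    (hG : G.Connected) (φ : G →g H ⊕g K) (u v : V) : (φ u).isLeft = (φ v).isLeft := by
  have h : (H ⊕g K).Reachable (φ u) (φ v) := (hG.preconnected u v).map φ
  rcases hu : φ u with a | a <;> rcases hv : φ v with b | b <;> rw [hu, hv] at h
  · rfl
  · exact absurd h (not_reachable_sum_inl_inr _ _)
  · exact absurd h.symm (not_reachable_sum_inl_inr _ _)
  · rfl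

/-- An isomorphism of disjoint sums that respects the sides restricts to the left summands. -/
lemma exists_restrict_left {A B A' B' : Type*} {G : SimpleGraph A} {H : SimpleGraph B}
    {G' : SimpleGraph A'} {H' : SimpleGraph B'} (e : G ⊕g H ≃g G' ⊕g H')
    (hl : ∀ a, (e (.inl a)).isLeft = true) (hr : ∀ b, (e (.inr b)).isLeft = false) :
    ∃ π : G ≃g G', ∀ a, e (.inl a) = .inl (π a) := by
  have hl' : ∀ a, ∃ a', e (.inl a) = .inl a' := fun a => Sum.isLeft_iff.1 (hl a)
  choose p hp using hl'
  have hinj : Function.Injective p := fun x y hxy => by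
    have : e (.inl x) = e (.inl y) := by rw [hp, hp, hxy]
    exact Sum.inl_injective (e.injective this)
  have hsurj : Function.Surjective p := fun y => by
    obtain ⟨x | x, hx⟩ := e.surjective (.inl y)
    · exact ⟨x, Sum.inl_injective ((hp x).symm.trans hx)⟩
    · have := hr x
      rw [hx] at this
      simp at this
  refine ⟨⟨Equiv.ofBijective p ⟨hinj, hsurj⟩, ?_⟩, hp⟩
  intro x y
  have := e.map_adj_iff (v := .inl x) (w := .inl y)
  rw [hp, hp, SimpleGraph.sum_adj_inl, SimpleGraph.sum_adj_inl] at this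
  exact this

open SimpleGraph in
/-- Every automorphism of the disjoint sum of two non-isomorphic connected graphs is a sum of
automorphisms of the summands. -/
lemma exists_sum_auts {A B : Type*} {G : SimpleGraph A} {H : SimpleGraph B}
    (hG : G.Connected) (hH : H.Connected) (hiso : IsEmpty (G ≃g H)) (e : G ⊕g H ≃g G ⊕g H) :
    ∃ (π : G ≃g G) (ρ : H ≃g H),
      (∀ a, e (.inl a) = .inl (π a)) ∧ ∀ b, e (.inr b) = .inr (ρ b) := by
  obtain ⟨a₀⟩ := hG.nonempty
  obtain ⟨b₀⟩ := hH.nonempty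
  have hl : ∀ a, (e (.inl a)).isLeft = (e (.inl a₀)).isLeft := fun a =>
    isLeft_const hG (e.toHom.comp Embedding.sumInl.toHom) a a₀
  have hr : ∀ b, (e (.inr b)).isLeft = (e (.inr b₀)).isLeft := fun b =>
    isLeft_const hH (e.toHom.comp Embedding.sumInr.toHom) b b₀
  -- The two summands go to different sides, since otherwise one side would be missed.
  have hne : (e (.inl a₀)).isLeft ≠ (e (.inr b₀)).isLeft := by
    intro h
    have hc : ∀ z, (e z).isLeft = (e (.inr b₀)).isLeft := by
      rintro (z | z)
      · exact (hl z).trans h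
      · exact hr z
    have h1 := hc (e.symm (.inl a₀))
    have h2 := hc (e.symm (.inr b₀))
    rw [e.apply_symm_apply] at h1 h2
    exact absurd (h1.trans h2.symm) (by simp)
  cases h : (e (.inl a₀)).isLeft
  · have h' : (e (.inr b₀)).isLeft = true := by simp_all
    obtain ⟨π, -⟩ := exists_restrict_left (e.trans Iso.sumComm)
      (fun a => by
        have := (hl a).trans h
        rcases hx : e (.inl a) with x | x <;> simp_all)
      (fun b => by
        have := (hr b).trans h'
        rcases hx : e (.inr b) with x | x <;> simp_all)
    exact (hiso.false π).elim
  · have h' : (e (.inr b₀)).isLeft = false := by simp_all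
    obtain ⟨π, hπ⟩ := exists_restrict_left e (fun a => (hl a).trans h) (fun b => (hr b).trans h')
    obtain ⟨ρ, hρ⟩ := exists_restrict_left ((Iso.sumComm.trans e).trans Iso.sumComm)
      (fun b => by
        have := (hr b).trans h'
        rcases hx : e (.inr b) with x | x <;> simp_all)
      (fun a => by
        have := (hl a).trans h
        rcases hx : e (.inl a) with x | x <;> simp_all)
    refine ⟨π, ρ, hπ, fun b => ?_⟩
    have := hρ b
    rcases hx : e (.inr b) with x | x <;> simp_all

/-- The proper `L`-colorings of `G`. -/
abbrev ListCol {V : Type*} (G : SimpleGraph V) (L : V → Finset ℕ) : Type _ :=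
  {f : V → ℕ // IsProper G f ∧ ∀ v, f v ∈ L v}

/-- Equivalence of proper `L`-colorings under the automorphisms of `G`, as a setoid. -/
def colSetoid {V : Type*} (G : SimpleGraph V) (L : V → Finset ℕ) : Setoid (ListCol G L) where
  r f g := ∃ π : G ≃g G, ∀ v, f.1 (π v) = g.1 v
  iseqv :=
    { refl := fun _ => ⟨.refl, fun _ => rfl⟩
      symm := fun {f g} ⟨π, h⟩ => ⟨π.symm, fun v => by rw [← h, π.apply_symm_apply]⟩
      trans := fun {f g i} ⟨π, h⟩ ⟨ρ, h'⟩ => ⟨ρ.trans π, fun v => (h (ρ v)).trans (h' v)⟩ }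

lemma uell_eq_card_quotient {V : Type*} (G : SimpleGraph V) (L : V → Finset ℕ) :
    uell G L = Nat.card (Quotient (colSetoid G L)) := rfl

/-- A list coloring of a disjoint sum is a pair of list colorings of the summands. -/
def listColSum {A B : Type*} (G : SimpleGraph A) (H : SimpleGraph B) (L : A ⊕ B → Finset ℕ) :
    ListCol (G ⊕g H) L ≃ ListCol G (L ∘ Sum.inl) × ListCol H (L ∘ Sum.inr) where
  toFun f :=
    (⟨f.1 ∘ Sum.inl, fun _ _ h => f.2.1 (SimpleGraph.sum_adj_inl.2 h), fun v => f.2.2 (.inl v)⟩,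
     ⟨f.1 ∘ Sum.inr, fun _ _ h => f.2.1 (SimpleGraph.sum_adj_inr.2 h), fun v => f.2.2 (.inr v)⟩)
  invFun p :=
    ⟨Sum.elim p.1.1 p.2.1, by
      rintro (u | u) (v | v) h
      · exact p.1.2.1 (SimpleGraph.sum_adj_inl.1 h)
      · simp at h
      · simp at h
      · exact p.2.2.1 (SimpleGraph.sum_adj_inr.1 h), by
      rintro (v | v)
      · exact p.1.2.2 v
      · exact p.2.2.2 v⟩
  left_inv f := by
    apply Subtype.ext
    funext v
    cases v <;> rfl
  right_inv _ := rfl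

lemma colSetoid_sum_iff {A B : Type*} {G : SimpleGraph A} {H : SimpleGraph B}
    (hG : G.Connected) (hH : H.Connected) (hiso : IsEmpty (G ≃g H)) (L : A ⊕ B → Finset ℕ)
    (f g : ListCol (G ⊕g H) L) :
    colSetoid (G ⊕g H) L f g ↔
      ((colSetoid G (L ∘ Sum.inl)).prod (colSetoid H (L ∘ Sum.inr)))
        (listColSum G H L f) (listColSum G H L g) := by
  constructor
  · rintro ⟨e, he⟩
    obtain ⟨π, ρ, hπ, hρ⟩ := exists_sum_auts hG hH hiso e
    refine ⟨⟨π, fun v => ?_⟩, ⟨ρ, fun v => ?_⟩⟩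
    · change f.1 (.inl (π v)) = g.1 (.inl v)
      rw [← hπ, he]
    · change f.1 (.inr (ρ v)) = g.1 (.inr v)
      rw [← hρ, he]
  · rintro ⟨⟨π, hπ⟩, ⟨ρ, hρ⟩⟩
    refine ⟨SimpleGraph.Iso.sumCongr π ρ, ?_⟩
    rintro (v | v)
    · exact hπ v
    · exact hρ v

lemma uell_sum {A B : Type*} {G : SimpleGraph A} {H : SimpleGraph B}
    (hG : G.Connected) (hH : H.Connected) (hiso : IsEmpty (G ≃g H)) (L : A ⊕ B → Finset ℕ) :
    uell (G ⊕g H) L = uell G (L ∘ Sum.inl) * uell H (L ∘ Sum.inr) := by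
  rw [uell_eq_card_quotient, uell_eq_card_quotient, uell_eq_card_quotient, ← Nat.card_prod]
  exact Nat.card_congr ((Quotient.congr (listColSum G H L)
    (colSetoid_sum_iff hG hH hiso L)).trans (Setoid.prodQuotientEquiv _ _).symm)

lemma Pell_le {V : Type*} (G : SimpleGraph V) {k : ℕ} {L : V → Finset ℕ}
    (hL : ∀ v, (L v).card = k) : Pell G k ≤ uell G L :=
  Nat.sInf_le ⟨L, hL, rfl⟩

lemma exists_Pell_eq {V : Type*} (G : SimpleGraph V) (k : ℕ) :
    ∃ L : V → Finset ℕ, (∀ v, (L v).card = k) ∧ Pell G k = uell G L :=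
  Nat.sInf_mem (s := {n | ∃ L : V → Finset ℕ, (∀ v, (L v).card = k) ∧ n = uell G L})
    ⟨_, fun _ => Finset.range k, fun _ => Finset.card_range k, rfl⟩

/-- Proposition: disjoint unions of non-isomorphic connected graphs.
If `G` is the disjoint union of connected, non-isomorphic graphs `G₁` and `G₂`, then
`P_ℓ(𝒢,k) = P_ℓ(𝒢₁,k) * P_ℓ(𝒢₂,k)` for every `k`. -/
theorem statement_4 {V₁ V₂ : Type*} [Fintype V₁] [Fintype V₂]
    (G₁ : SimpleGraph V₁) (G₂ : SimpleGraph V₂)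
    (h₁ : G₁.Connected) (h₂ : G₂.Connected) (hiso : IsEmpty (G₁ ≃g G₂)) (k : ℕ) :
    Pell (G₁ ⊕g G₂) k = Pell G₁ k * Pell G₂ k := by
  apply le_antisymm
  · obtain ⟨L₁, hL₁, e₁⟩ := exists_Pell_eq G₁ k
    obtain ⟨L₂, hL₂, e₂⟩ := exists_Pell_eq G₂ k
    have h := Pell_le (G₁ ⊕g G₂) (L := Sum.elim L₁ L₂) (k := k) (by
      rintro (v | v)
      · exact hL₁ v
      · exact hL₂ v)
    rw [uell_sum h₁ h₂ hiso, Sum.elim_comp_inl, Sum.elim_comp_inr] at h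
    rwa [e₁, e₂]
  · obtain ⟨L, hL, e⟩ := exists_Pell_eq (G₁ ⊕g G₂) k
    rw [e, uell_sum h₁ h₂ hiso]
    exact Nat.mul_le_mul (Pell_le G₁ fun v => hL _) (Pell_le G₂ fun v => hL _)
end

section
/- Let G be a connected finite simple graph with n vertices and m edges, where m ≥ 4. Suppose that for every non-identity automorphism π of G the following holds: if every cycle of π is an independent set in G, then π has at most n − 2 cycles. Then there exists N ∈ ℕ such that for every k ≥ N, the minimum of u_ℓ(G,L) over all k-assignments L for G equals the number of orbits of the action of Aut(G) on proper colorings f : V(G) → {1,…,k} (where π sends f to f∘π⁻¹). -/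
section Helpers
open scoped Classical

/-! ### Burnside's inequality for list colorings -/

/-- The number of functions `f` with `f v ∈ L v` for all `v` (not necessarily proper
colorings) that satisfy `Q`. -/
noncomputable def cnt {V : Type*} [Fintype V] (L : V → Finset ℕ) (Q : (V → ℕ) → Prop) : ℕ :=
  ((Fintype.piFinset L).filter Q).card

theorem cnt_eq_zero {V : Type*} [Fintype V] (L : V → Finset ℕ) (Q : (V → ℕ) → Prop)
    (h : ∀ f, ¬ Q f) : cnt L Q = 0 := by
  simp [cnt, h]

theorem finite_col {V : Type*} [Fintype V] (L : V → Finset ℕ) (Q : (V → ℕ) → Prop) :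
    Finite {f : V → ℕ // Q f ∧ ∀ v, f v ∈ L v} := by
  have : {f : V → ℕ | Q f ∧ ∀ v, f v ∈ L v}.Finite :=
    (Fintype.piFinset L).finite_toSet.subset fun f hf => by simpa using hf.2
  exact this.to_subtype

/-- The two ways of counting pairs `(f, π)` of a proper `L`-coloring `f` and an automorphism `π`
fixing it. -/
theorem card_fixed_pairs {V : Type*} [Fintype V] (G : SimpleGraph V) (L : V → Finset ℕ)
    [Fintype (G ≃g G)] :
    Nat.card (Σ f : {f : V → ℕ // IsProper G f ∧ ∀ v, f v ∈ L v},
      {π : G ≃g G // ∀ v, f.1 (π v) = f.1 v}) =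
    ∑ π : G ≃g G, cnt L (fun f => IsProper G f ∧ ∀ v, f (π v) = f v) := by
  have := finite_col L (IsProper G)
  let e : (Σ f : {f : V → ℕ // IsProper G f ∧ ∀ v, f v ∈ L v},
      {π : G ≃g G // ∀ v, f.1 (π v) = f.1 v}) ≃
      Σ π : G ≃g G, {f : V → ℕ // f ∈ (Fintype.piFinset L).filter
        (fun f => IsProper G f ∧ ∀ v, f (π v) = f v)} :=
    { toFun := fun p => ⟨p.2.1, p.1.1, by
        have := p.1.2; have := p.2.2; simp_all⟩
      invFun := fun p =>
        have h := Finset.mem_filter.1 p.2.2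
        ⟨⟨p.2.1, h.2.1, Fintype.mem_piFinset.1 h.1⟩, p.1, h.2.2⟩
      left_inv := fun p => rfl
      right_inv := fun p => rfl }
  rw [Nat.card_congr e, Nat.card_sigma]
  refine Finset.sum_congr rfl fun π _ => ?_
  rw [Nat.card_eq_fintype_card, Fintype.card_coe, cnt]
  congr!

/-- Burnside's lemma for the partial action of `Aut(G)` on proper `L`-colorings. Sending a pair
`(f, π)` with `f ∘ π = f` to the class of `f` and the composite `σ_f ∘ π`, where
`f₀ ∘ σ_f = f` for the chosen representative `f₀` of the class, is injective. It is also
surjective if all lists agree, because then the colorings are closed under `Aut(G)`. -/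
theorem sum_fixed_le {V : Type*} [Fintype V] (G : SimpleGraph V) (L : V → Finset ℕ)
    [Fintype (G ≃g G)] :
    ∑ π : G ≃g G, cnt L (fun f => IsProper G f ∧ ∀ v, f (π v) = f v) ≤
      uell G L * Fintype.card (G ≃g G) ∧
    ((∀ u v, L u = L v) → uell G L * Fintype.card (G ≃g G) ≤
      ∑ π : G ≃g G, cnt L (fun f => IsProper G f ∧ ∀ v, f (π v) = f v)) := by
  have := finite_col L (IsProper G)
  rw [← card_fixed_pairs, uell, ← Nat.card_eq_fintype_card, ← Nat.card_prod]
  set r : {f : V → ℕ // IsProper G f ∧ ∀ v, f v ∈ L v} →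
    {f : V → ℕ // IsProper G f ∧ ∀ v, f v ∈ L v} → Prop :=
    fun f g => ∃ π : G ≃g G, ∀ v, f.1 (π v) = g.1 v with hr
  have heq : Equivalence r := by
    refine ⟨fun f => ⟨1, fun v => rfl⟩, ?_, ?_⟩
    · rintro f g ⟨π, h⟩
      exact ⟨π.symm, fun v => by rw [← h]; simp⟩
    · rintro f g h ⟨π, h1⟩ ⟨σ, h2⟩
      exact ⟨σ.trans π, fun v => by rw [← h2, ← h1]; rfl⟩
  have hex : ∀ f, r (Quot.out (Quot.mk r f)) f := fun f =>
    heq.eqvGen_iff.1 (Quot.eqvGen_exact (Quot.out_eq _))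
  choose σ hσ using hex
  let F : (Σ f : {f : V → ℕ // IsProper G f ∧ ∀ v, f v ∈ L v},
      {π : G ≃g G // ∀ v, f.1 (π v) = f.1 v}) → Quot r × (G ≃g G) :=
    fun p => (Quot.mk r p.1, p.2.1.trans (σ p.1))
  have hF : ∀ p v, (Quot.out (F p).1).1 ((F p).2 v) = p.1.1 v := by
    intro p v
    exact (hσ p.1 _).trans (p.2.2 v)
  constructor
  · -- The image determines `f = f₀ ∘ (σ_f ∘ π)`, hence `σ_f`, hence `π`.
    apply Nat.card_le_card_of_injective F
    rintro ⟨f, π, hπ⟩ ⟨g, τ, hτ⟩ h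
    have hfg : f = g := by
      apply Subtype.ext; funext v
      have h1 := hF ⟨f, π, hπ⟩ v
      have h2 := hF ⟨g, τ, hτ⟩ v
      rw [← h1, ← h2, h]
    subst hfg
    have h2 : π.trans (σ f) = τ.trans (σ f) := congrArg Prod.snd h
    have : π = τ := by
      ext v
      have := DFunLike.congr_fun h2 v
      exact (σ f).injective this
    subst this
    rfl
  · intro hc
    apply Nat.card_le_card_of_surjective F
    rintro ⟨q, τ⟩
    let f : {f : V → ℕ // IsProper G f ∧ ∀ v, f v ∈ L v} :=
      ⟨fun v => (Quot.out q).1 (τ v),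
        fun u v h => (Quot.out q).2.1 (τ.map_rel_iff.2 h), fun v => by
          rw [hc v (τ v)]; exact (Quot.out q).2.2 _⟩
    have hq : Quot.mk r f = q := by
      conv_rhs => rw [← Quot.out_eq q]
      exact Quot.sound (heq.symm ⟨τ, fun v => rfl⟩)
    refine ⟨⟨f, τ.trans (σ f).symm, ?_⟩, ?_⟩
    · intro v
      have := hσ f ((σ f).symm (τ v))
      rw [hq] at this
      have h2 : (σ f) ((σ f).symm (τ v)) = τ v := by simp
      rw [h2] at this
      exact this.symm
    · refine Prod.ext hq ?_
      ext v
      change (σ f) ((σ f).symm (τ v)) = τ v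
      simp

theorem unlabeledP_eq {V : Type*} [Fintype V] (G : SimpleGraph V) (S : Finset ℕ) :
    unlabeledP G S.card = uell G (fun _ => S) := by
  let e : Fin S.card ≃ S := S.equivFin.symm
  refine Nat.card_congr (Quot.congr
    { toFun := fun f => ⟨fun v => (e (f.1 v)).1, fun u v h h' => f.2 h
        (e.injective (Subtype.ext h')), fun v => (e (f.1 v)).2⟩
      invFun := fun f => ⟨fun v => e.symm ⟨f.1 v, f.2.2 v⟩, fun u v h h' => f.2.1 h (by
        simpa using h')⟩
      left_inv := fun f => by simp
      right_inv := fun f => by simp } ?_)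
  intro f g
  constructor
  · rintro ⟨π, h⟩
    exact ⟨π, fun v => by simp [h]⟩
  · rintro ⟨π, h⟩
    exact ⟨π, fun v => e.injective (Subtype.ext (h v))⟩

/-! ### Colorings that leave the common colors -/

/-- A function fixed by `ρ` is determined by its values on the image of `ρ`, which has at most
`|V| - 2` elements; one of these values, at `ρ v₀`, lies in `W`. -/
theorem cnt_mem_le {V : Type*} [Fintype V] (L : V → Finset ℕ) (k : ℕ) (hL : ∀ v, (L v).card = k)
    (hk : 1 ≤ k) (ρ : V → V) (hρ : (Finset.univ.image ρ).card ≤ Fintype.card V - 2)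
    (v₀ : V) (W : Finset ℕ) :
    cnt L (fun f => (∀ v, f (ρ v) = f v) ∧ f v₀ ∈ W) ≤ W.card * k ^ (Fintype.card V - 3) := by
  set T := Finset.univ.image ρ with hT
  have h0 : ρ v₀ ∈ T := by simp [hT]
  have h1 : cnt L (fun f => (∀ v, f (ρ v) = f v) ∧ f v₀ ∈ W) ≤
      (Fintype.piFinset (fun x : T => if x = ⟨ρ v₀, h0⟩ then W else L x)).card := by
    apply Finset.card_le_card_of_injOn (fun f x => f x.1)
    · intro f hf
      simp only [Finset.coe_filter, Fintype.mem_piFinset, Set.mem_ofPred_eq] at hf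
      simp only [Finset.mem_coe, Fintype.mem_piFinset]
      intro x
      split_ifs with h
      · subst h; simpa [hf.2.1] using hf.2.2
      · exact hf.1 _
    · intro f hf g hg h
      simp only [Finset.coe_filter, Set.mem_ofPred_eq] at hf hg
      funext v
      rw [← hf.2.1, ← hg.2.1]
      exact congrFun h ⟨ρ v, by simp [hT]⟩
  refine h1.trans ?_
  rw [Fintype.card_piFinset, ← Finset.mul_prod_erase _ _ (Finset.mem_univ ⟨ρ v₀, h0⟩), if_pos rfl,
    Finset.prod_congr rfl (g := fun _ => k)]
  · rw [Finset.prod_const, Finset.card_erase_of_mem (Finset.mem_univ _), Finset.card_univ,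
      Fintype.card_coe]
    exact Nat.mul_le_mul_left _ (Nat.pow_le_pow_right hk (by omega))
  · intro x hx
    rw [if_neg (Finset.ne_of_mem_erase hx), hL]

/-- Passing from lists `L'` to lists `L` that still contain the common colors `U` loses at most
`|V| * t * k ^ (|V| - 3)` of the functions satisfying `Q`, because only functions taking some value
outside `U` can be lost, and these are invariant under `ρ`. -/
theorem cnt_le_cnt_add {V : Type*} [Fintype V] (L L' : V → Finset ℕ) (U : Finset ℕ) (k t : ℕ)
    (hL' : ∀ v, (L' v).card = k) (hU : ∀ v, U ⊆ L v) (ht : ∀ v, (L' v \ U).card = t)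
    (hk : 1 ≤ k) (ρ : V → V) (hρ : (Finset.univ.image ρ).card ≤ Fintype.card V - 2)
    (Q : (V → ℕ) → Prop) (hQ : ∀ f, Q f → ∀ v, f (ρ v) = f v) :
    cnt L' Q ≤ cnt L Q + Fintype.card V * (t * k ^ (Fintype.card V - 3)) := by
  have hsub : (Fintype.piFinset L').filter Q ⊆ (Fintype.piFinset L).filter Q ∪
      Finset.univ.biUnion (fun v₀ => (Fintype.piFinset L').filter
        (fun f => (∀ v, f (ρ v) = f v) ∧ f v₀ ∈ L' v₀ \ U)) := by
    intro f hf
    simp only [Finset.mem_filter, Fintype.mem_piFinset] at hf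
    by_cases h : ∀ v, f v ∈ U
    · refine Finset.mem_union_left _ ?_
      simp only [Finset.mem_filter, Fintype.mem_piFinset]
      exact ⟨fun v => hU v (h v), hf.2⟩
    · push Not at h
      obtain ⟨v, hv⟩ := h
      refine Finset.mem_union_right _ ?_
      simp only [Finset.mem_biUnion, Finset.mem_filter, Fintype.mem_piFinset, Finset.mem_sdiff,
        Finset.mem_univ, true_and]
      exact ⟨v, hf.1, hQ f hf.2, hf.1 v, hv⟩
  refine (Finset.card_le_card hsub).trans ((Finset.card_union_le _ _).trans ?_)
  refine Nat.add_le_add_left (Finset.card_biUnion_le.trans ?_) _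
  refine (Finset.sum_le_card_nsmul _ _ (t * k ^ (Fintype.card V - 3)) ?_).trans_eq (by simp)
  intro v _
  have := cnt_mem_le L' k hL' hk ρ hρ v (L' v \ U)
  rw [ht] at this
  refine le_trans (le_of_eq ?_) this
  unfold cnt
  congr!

/-! ### Comparing proper list colorings with proper colorings -/

/-- Inclusion–exclusion over the edges: proper `L`-colorings counted through the functions that
are constant on every edge of `A`, for all sets `A` of edges. -/
theorem cnt_proper {V : Type*} [Fintype V] (G : SimpleGraph V) (L : V → Finset ℕ) :
    (cnt L (IsProper G) : ℤ) = ∑ A ∈ G.edgeFinset.powerset,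
      (-1) ^ A.card * (cnt L (fun f => ∀ e ∈ A, (e.map f).IsDiag) : ℤ) := by
  have h1 : ∀ f : V → ℕ, (if IsProper G f then 1 else 0 : ℤ) =
      ∏ e ∈ G.edgeFinset, (1 - if (e.map f).IsDiag then 1 else 0) := by
    intro f
    have hp : IsProper G f ↔ ∀ e ∈ G.edgeFinset, ¬ (e.map f).IsDiag := by
      constructor
      · intro h e
        induction e using Sym2.ind with
        | _ u v => simpa using @h u v
      · intro h u v huv
        simpa using h s(u, v) (by simpa using huv)
    split_ifs with h
    · rw [Finset.prod_congr rfl (g := fun _ => 1), Finset.prod_const_one]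
      intro e he
      rw [if_neg (hp.1 h e he), sub_zero]
    · rw [hp] at h
      push Not at h
      obtain ⟨e, he, hd⟩ := h
      rw [Finset.prod_eq_zero he]
      rw [if_pos hd, sub_self]
  have h2 : ∀ f : V → ℕ, (if IsProper G f then 1 else 0 : ℤ) =
      ∑ A ∈ G.edgeFinset.powerset, (-1) ^ A.card * (if ∀ e ∈ A, (e.map f).IsDiag then 1 else 0) := by
    intro f
    rw [h1]
    have := Finset.prod_one_add (f := fun e : Sym2 V => - (if (e.map f).IsDiag then 1 else 0 : ℤ))
      (s := G.edgeFinset)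
    simp only [← sub_eq_add_neg] at this
    rw [this]
    refine Finset.sum_congr rfl fun A _ => ?_
    rw [Finset.prod_neg, Finset.prod_ite_zero]
    simp
  simp only [cnt, Finset.card_filter, Nat.cast_sum, Nat.cast_ite, Nat.cast_one, Nat.cast_zero]
  rw [Finset.sum_congr rfl (fun f _ => h2 f), Finset.sum_comm]
  simp only [Finset.mul_sum]

theorem cnt_edge {V : Type*} [Fintype V] (L : V → Finset ℕ) (k : ℕ) (hL : ∀ v, (L v).card = k)
    {u v : V} (huv : u ≠ v) :
    cnt L (fun f => ∀ e ∈ ({s(u, v)} : Finset (Sym2 V)), (e.map f).IsDiag) =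
      (L u ∩ L v).card * k ^ (Fintype.card V - 2) := by
  have h1 : cnt L (fun f => ∀ e ∈ ({s(u, v)} : Finset (Sym2 V)), (e.map f).IsDiag) =
      (Fintype.piFinset (Function.update (Function.update L u (L u ∩ L v)) v {0})).card := by
    apply Finset.card_nbij' (fun f => Function.update f v 0) (fun g => Function.update g v (g u))
    · intro f hf
      simp at hf
      simp only [Finset.mem_coe, Fintype.mem_piFinset]
      intro x
      by_cases hx : x = v
      · subst hx; simp
      · by_cases hx' : x = u
        · subst hx'; simpa [huv, hf.1] using hf.2 ▸ hf.1 v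
        · simp [hx, hx', hf.1]
    · intro g hg
      simp only [Finset.mem_coe, Fintype.mem_piFinset] at hg
      simp only [Finset.coe_filter, Fintype.mem_piFinset, Set.mem_ofPred_eq, Finset.mem_singleton,
        forall_eq, Sym2.map_mk, Sym2.mk_isDiag_iff]
      have hu := hg u
      simp [huv] at hu
      constructor
      · intro x
        by_cases hx : x = v
        · subst hx; simp [hu]
        · by_cases hx' : x = u
          · subst hx'; simp [huv, hu]
          · have := hg x
            simpa [hx, hx'] using this
      · simp [huv]
    · intro f hf
      simp at hf
      simp [huv, hf.2]
    · intro g hg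
      have := hg
      simp only [Finset.mem_coe, Fintype.mem_piFinset] at this
      have := this v
      simp at this
      simp [← this]
  rw [h1, Fintype.card_piFinset, ← Finset.mul_prod_erase _ _ (Finset.mem_univ v),
    ← Finset.mul_prod_erase _ _ (Finset.mem_erase.2 ⟨huv, Finset.mem_univ u⟩),
    Finset.prod_congr rfl (g := fun _ => k)]
  · rw [Finset.prod_const, Finset.card_erase_of_mem (Finset.mem_erase.2 ⟨huv, Finset.mem_univ u⟩),
      Finset.card_erase_of_mem (Finset.mem_univ v), Finset.card_univ]
    simp [huv, Nat.sub_sub]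
  · intro x hx
    simp only [Finset.mem_erase, Finset.mem_univ, and_true] at hx
    simp [hx.1, hx.2, hL]

/-- Two distinct edges force two vertices to repeat values taken elsewhere, so functions that are
constant on the edges of `A` depend only on at most `|V| - 2` coordinates. -/
theorem exists_retraction {V : Type*} [Fintype V] (G : SimpleGraph V) (A : Finset (Sym2 V))
    (hA : A ⊆ G.edgeFinset) (h2 : 2 ≤ A.card) :
    ∃ ρ : V → V, (Finset.univ.image ρ).card ≤ Fintype.card V - 2 ∧
      ∀ f : V → ℕ, (∀ e ∈ A, (e.map f).IsDiag) → ∀ v, f (ρ v) = f v := by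
  have key : ∀ x y x' y' : V, x ≠ y → x' ≠ x → x' ≠ y → y' ≠ x → y' ≠ y →
      s(x, x') ∈ A → s(y, y') ∈ A → 
      ∃ ρ : V → V, (Finset.univ.image ρ).card ≤ Fintype.card V - 2 ∧
      ∀ f : V → ℕ, (∀ e ∈ A, (e.map f).IsDiag) → ∀ v, f (ρ v) = f v := by
    intro x y x' y' hxy h1 h2 h3 h4 hx hy
    refine ⟨fun v => if v = x then x' else if v = y then y' else v, ?_, ?_⟩
    · have : Finset.univ.image (fun v => if v = x then x' else if v = y then y' else v) ⊆
          Finset.univ \ {x, y} := by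
        intro z hz
        simp only [Finset.mem_image, Finset.mem_univ, true_and] at hz
        obtain ⟨v, rfl⟩ := hz
        simp only [Finset.mem_sdiff, Finset.mem_univ, true_and, Finset.mem_insert,
          Finset.mem_singleton]
        split_ifs <;> simp_all
      refine (Finset.card_le_card this).trans ?_
      rw [Finset.card_sdiff_of_subset (Finset.subset_univ _), Finset.card_pair hxy,
        Finset.card_univ]
    · intro f hf v
      have e1 := hf _ hx
      have e2 := hf _ hy
      simp at e1 e2
      dsimp only
      split_ifs with ha hb
      · rw [ha, e1]
      · rw [hb, e2]
      · rfl
  obtain ⟨e₁, he₁, e₂, he₂, hne⟩ := Finset.one_lt_card.1 h2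
  have hG₁ := hA he₁
  have hG₂ := hA he₂
  induction e₁ using Sym2.ind with
  | _ a b =>
  induction e₂ using Sym2.ind with
  | _ c d =>
  simp only [SimpleGraph.mem_edgeFinset, SimpleGraph.mem_edgeSet] at hG₁ hG₂
  have hab := hG₁.ne
  have hcd := hG₂.ne
  have he₁' : s(b, a) ∈ A := by rwa [Sym2.eq_swap]
  have he₂' : s(d, c) ∈ A := by rwa [Sym2.eq_swap]
  simp only [ne_eq, Sym2.eq_iff, not_or, not_and] at hne
  by_cases hac : a = c
  · subst hac
    exact key b d a a (fun h => hne.1 rfl h) hab hcd hab hcd he₁' he₂'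
  by_cases had : a = d
  · subst had
    exact key b c a a (fun h => hne.2 rfl h) hab (Ne.symm hcd) hab (Ne.symm hcd) he₁' he₂
  by_cases hbc : b = c
  · subst hbc
    exact key a d b b had (Ne.symm hab) hcd (Ne.symm hab) hcd he₁ he₂'
  · by_cases hbd : b = d
    · subst hbd
      exact key a c b b hac (Ne.symm hab) (Ne.symm hcd) (Ne.symm hab) (Ne.symm hcd) he₁ he₂
    · exact key a c b d hac (Ne.symm hab) hbc (Ne.symm had) (Ne.symm hcd) he₁ he₂

/-- The `|A| = 1` terms of inclusion–exclusion. By connectedness every color of `L r` missing from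
some list belongs to the list of exactly one end of some edge `uv`, and each edge accounts for at
most `|L u \ L v| + |L v \ L u| = 2 * (k - |L u ∩ L v|)` colors. -/
theorem defect_le {V : Type*} [Fintype V] (G : SimpleGraph V) (hconn : G.Connected)
    (L : V → Finset ℕ) (U : Finset ℕ) (hU : ∀ c, c ∈ U ↔ ∀ v, c ∈ L v) (r : V) (k : ℕ)
    (hL : ∀ v, (L v).card = k) :
    ((L r \ U).card : ℤ) * k ^ (Fintype.card V - 2) ≤ 2 * ∑ e ∈ G.edgeFinset,
      ((cnt (fun _ => L r) (fun f => ∀ e' ∈ ({e} : Finset (Sym2 V)), (e'.map f).IsDiag) : ℤ) -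
        cnt L (fun f => ∀ e' ∈ ({e} : Finset (Sym2 V)), (e'.map f).IsDiag)) := by
  let D : Sym2 V → Finset ℕ := fun e => (L r \ U).filter
    (fun c => (∃ x ∈ e, c ∈ L x) ∧ ∃ x ∈ e, c ∉ L x)
  have hsub : L r \ U ⊆ G.edgeFinset.biUnion D := by
    intro c hc
    have hc' := hc
    rw [Finset.mem_sdiff, hU] at hc
    push Not at hc
    obtain ⟨h1, w, hw⟩ := hc
    obtain ⟨p⟩ := hconn.preconnected r w
    obtain ⟨d, -, hd1, hd2⟩ := p.exists_boundary_dart {x | c ∈ L x} h1 hw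
    simp only [Finset.mem_biUnion]
    refine ⟨d.edge, by simp, ?_⟩
    rw [Finset.mem_filter]
    exact ⟨hc', ⟨d.fst, by simp [SimpleGraph.Dart.edge], hd1⟩,
      ⟨d.snd, by simp [SimpleGraph.Dart.edge], hd2⟩⟩
  have hcard := (Finset.card_le_card hsub).trans Finset.card_biUnion_le
  have hcard' : ((L r \ U).card : ℤ) ≤ ∑ e ∈ G.edgeFinset, ((D e).card : ℤ) := by
    exact_mod_cast hcard
  refine (mul_le_mul_of_nonneg_right hcard' (by positivity)).trans ?_
  rw [Finset.sum_mul, Finset.mul_sum]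
  refine Finset.sum_le_sum fun e he => ?_
  induction e using Sym2.ind with
  | _ u v =>
  simp only [SimpleGraph.mem_edgeFinset, SimpleGraph.mem_edgeSet] at he
  rw [cnt_edge L k hL he.ne, cnt_edge (fun _ => L r) k (fun _ => hL r) he.ne]
  have hD : D s(u, v) ⊆ (L u \ L v) ∪ (L v \ L u) := by
    intro c hc
    rw [Finset.mem_filter] at hc
    simp only [Sym2.mem_iff, exists_eq_or_imp, exists_eq_left] at hc
    simp only [Finset.mem_union, Finset.mem_sdiff]
    tauto
  have h1 := (Finset.card_le_card hD).trans (Finset.card_union_le _ _)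
  have h2 := Finset.card_sdiff_add_card_inter (L u) (L v)
  have h3 := Finset.card_sdiff_add_card_inter (L v) (L u)
  rw [Finset.inter_comm (L v)] at h3
  rw [hL] at h2 h3
  rw [Finset.inter_self, hL]
  have h4 : ((D s(u, v)).card : ℤ) ≤ 2 * ((k : ℤ) - (L u ∩ L v).card) := by omega
  push_cast
  calc ((D s(u, v)).card : ℤ) * k ^ (Fintype.card V - 2)
      ≤ 2 * ((k : ℤ) - (L u ∩ L v).card) * k ^ (Fintype.card V - 2) :=
        mul_le_mul_of_nonneg_right h4 (by positivity)
    _ = _ := by ring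

/-- If the lists have exactly `k - t` common colors, then `P(G,L)` exceeds `P(G,k)` by at least
`t * k ^ (n - 2) / 2 - 2 ^ m * n * t * k ^ (n - 3)`: single edges contribute the first term and each
larger set of edges an error of at most `n * t * k ^ (n - 3)`. -/
theorem proper_diff {V : Type*} [Fintype V] (G : SimpleGraph V) (hconn : G.Connected)
    (L : V → Finset ℕ) (U : Finset ℕ) (hU : ∀ c, c ∈ U ↔ ∀ v, c ∈ L v) (r : V) (k t : ℕ)
    (hL : ∀ v, (L v).card = k) (ht : ∀ v, (L v \ U).card = t) (hk : 1 ≤ k) :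
    (t : ℤ) * k ^ (Fintype.card V - 2) ≤
      2 * ((cnt L (IsProper G) : ℤ) - cnt (fun _ => L r) (IsProper G)) +
      2 * (2 ^ G.edgeFinset.card * (Fintype.card V * (t * k ^ (Fintype.card V - 3)))) := by
  have hdef := defect_le G hconn L U hU r k hL
  rw [ht] at hdef
  have hUL : ∀ v, U ⊆ L v := fun v c hc => (hU c).1 hc v
  set B : ℤ := Fintype.card V * (t * k ^ (Fintype.card V - 3)) with hB
  have hB0 : 0 ≤ B := by positivity
  set N : (V → Finset ℕ) → Finset (Sym2 V) → ℤ := fun M A =>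
    (cnt M (fun f => ∀ e ∈ A, (e.map f).IsDiag) : ℤ) with hN
  set K : V → Finset ℕ := fun _ => L r with hK
  have hterm : ∀ A ∈ G.edgeFinset.powerset,
      (if A.card = 1 then N K A - N L A else 0) - B ≤
        (-1) ^ A.card * N L A - (-1) ^ A.card * N K A := by
    intro A hA
    rw [Finset.mem_powerset] at hA
    by_cases h1 : A.card = 1
    · rw [if_pos h1, h1]; linarith
    rw [if_neg h1]
    rcases Nat.eq_zero_or_pos A.card with h0 | hpos
    · rw [Finset.card_eq_zero] at h0
      subst h0
      have : N L ∅ = N K ∅ := by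
        simp [hN, cnt, Fintype.card_piFinset, hL, hK]
      rw [this]; linarith
    · obtain ⟨ρ, hρ, hQ⟩ := exists_retraction G A hA (by omega)
      have a1 := cnt_le_cnt_add L K U k t (fun _ => hL r) hUL (fun _ => ht r) hk ρ hρ _ hQ
      have a2 := cnt_le_cnt_add K L U k t hL (fun _ => hUL r) ht hk ρ hρ _ hQ
      have a1' : N K A ≤ N L A + B := by simp only [hN, hB]; exact_mod_cast a1
      have a2' : N L A ≤ N K A + B := by simp only [hN, hB]; exact_mod_cast a2
      rcases neg_one_pow_eq_or ℤ A.card with h | h <;> rw [h] <;> linarith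
  have hsum := Finset.sum_le_sum hterm
  rw [Finset.sum_sub_distrib, Finset.sum_sub_distrib, ← cnt_proper, ← cnt_proper,
    Finset.sum_const, Finset.card_powerset, ← Finset.sum_filter,
    ← Finset.powersetCard_eq_filter, Finset.powersetCard_one, Finset.sum_map] at hsum
  simp only [nsmul_eq_mul, Nat.cast_pow, Nat.cast_ofNat, Function.Embedding.coeFn_mk] at hsum
  linarith

/-! ### Colorings fixed by an automorphism -/

theorem fixed_zpow {V : Type*} (π : Equiv.Perm V) (f : V → ℕ) (h : ∀ v, f (π v) = f v) {u v : V}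
    (huv : Equiv.Perm.SameCycle π u v) : f u = f v := by
  obtain ⟨i, rfl⟩ := huv
  induction i with
  | zero => simp
  | succ i ih => rw [add_comm, zpow_add, Equiv.Perm.mul_apply, zpow_one, h, ← ih]
  | pred i ih =>
    rw [ih, ← h ((π ^ (-(i : ℤ) - 1)) u), ← Equiv.Perm.mul_apply, ← zpow_one_add]
    congr 3; ring

/-- Passing from `L'` to `L` loses at most `n * t * k ^ (n - 3)` of the proper colorings fixed by `π`:
there are none when some cycle of `π` contains an edge, and otherwise they depend on at most `n - 2`
coordinates, one for each cycle. -/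
theorem fixed_le {V : Type*} [Fintype V] (G : SimpleGraph V) (π : G ≃g G)
    (hπ : (∀ u v : V, Equiv.Perm.SameCycle π.toEquiv u v → ¬ G.Adj u v) →
      Nat.card (Quot (Equiv.Perm.SameCycle π.toEquiv)) ≤ Fintype.card V - 2)
    (L L' : V → Finset ℕ) (U : Finset ℕ) (k t : ℕ)
    (hL' : ∀ v, (L' v).card = k) (hU : ∀ v, U ⊆ L v) (ht : ∀ v, (L' v \ U).card = t)
    (hk : 1 ≤ k) :
    cnt L' (fun f => IsProper G f ∧ ∀ v, f (π v) = f v) ≤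
      cnt L (fun f => IsProper G f ∧ ∀ v, f (π v) = f v) +
        Fintype.card V * (t * k ^ (Fintype.card V - 3)) := by
  have : Fintype (Quot (Equiv.Perm.SameCycle π.toEquiv)) := Fintype.ofFinite _
  by_cases hind : ∀ u v : V, Equiv.Perm.SameCycle π.toEquiv u v → ¬ G.Adj u v
  · refine cnt_le_cnt_add L L' U k t hL' hU ht hk
      (fun v => Quot.out (Quot.mk (Equiv.Perm.SameCycle π.toEquiv) v)) ?_ _ ?_
    · refine le_trans ?_ (hπ hind)
      have hsub : Finset.univ.image (fun v => Quot.out (Quot.mk (Equiv.Perm.SameCycle π.toEquiv) v)) ⊆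
          Finset.univ.image (Quot.out (r := Equiv.Perm.SameCycle π.toEquiv)) := by
        intro x hx
        simp only [Finset.mem_image, Finset.mem_univ, true_and] at hx ⊢
        obtain ⟨v, rfl⟩ := hx
        exact ⟨_, rfl⟩
      refine (Finset.card_le_card hsub).trans (Finset.card_image_le.trans ?_)
      rw [Nat.card_eq_fintype_card, Finset.card_univ]
    · rintro f ⟨-, hf⟩ v
      let g : Quot (Equiv.Perm.SameCycle π.toEquiv) → ℕ :=
        Quot.lift f fun a b h => fixed_zpow π.toEquiv f hf h
      exact congrArg g (Quot.out_eq (Quot.mk (Equiv.Perm.SameCycle π.toEquiv) v))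
  · push Not at hind
    obtain ⟨u, v, h1, h2⟩ := hind
    have : cnt L' (fun f => IsProper G f ∧ ∀ v, f (π v) = f v) = 0 := by
      refine cnt_eq_zero _ _ ?_
      rintro f ⟨hf, hf'⟩
      exact hf h2 (fixed_zpow π.toEquiv f hf' h1)
    omega

end Helpers

/-- Theorem: main theorem for graphs with few independent cycles.
Let `G` be connected with `n` vertices and `m ≥ 4` edges such that every non-identity
automorphism `π` whose cycles (orbits of the cyclic group generated by `π`) are all
independent sets has at most `n - 2` cycles. Then there is `N` such that for all
`k ≥ N`, `P_ℓ(𝒢,k) = P(𝒢,k)`. -/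
theorem statement_5 {V : Type*} [Fintype V] (G : SimpleGraph V) (n m : ℕ)
    (hn : Fintype.card V = n) (hm : Nat.card G.edgeSet = m) (hm4 : 4 ≤ m)
    (hconn : G.Connected)
    (haut : ∀ π : G ≃g G, π.toEquiv ≠ Equiv.refl V →
      (∀ u v : V, Equiv.Perm.SameCycle π.toEquiv u v → ¬ G.Adj u v) →
      Nat.card (Quot (Equiv.Perm.SameCycle π.toEquiv)) ≤ n - 2) :
    ∃ N : ℕ, ∀ k : ℕ, N ≤ k → Pell G k = unlabeledP G k := by
  classical
  subst hn
  have : Finite (G ≃g G) := DFunLike.finite _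
  have := Fintype.ofFinite (G ≃g G)
  -- `n ≥ 3` makes `n - 2 = (n - 3) + 1` valid for truncated subtraction.
  have hn3 : 3 ≤ Fintype.card V := by
    by_contra! h
    have h1 := G.card_edgeFinset_le_card_choose_two
    have h2 : (Fintype.card V).choose 2 ≤ Nat.choose 2 2 := Nat.choose_le_choose 2 (by omega)
    rw [Nat.card_eq_fintype_card, ← SimpleGraph.edgeFinset_card] at hm
    simp at h2
    omega
  obtain ⟨r⟩ := hconn.nonempty
  refine ⟨2 * 2 ^ G.edgeFinset.card * Fintype.card V +
    2 * Fintype.card (G ≃g G) * Fintype.card V + 1, fun k hk => ?_⟩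
  have hlow : ∀ L : V → Finset ℕ, (∀ v, (L v).card = k) → unlabeledP G k ≤ uell G L := by
    intro L hL
    rw [← hL r, unlabeledP_eq]
    let U : Finset ℕ := (L r).filter (fun c => ∀ v, c ∈ L v)
    have hU : ∀ c, c ∈ U ↔ ∀ v, c ∈ L v := by
      intro c
      simp only [U, Finset.mem_filter]
      exact ⟨fun h => h.2, fun h => ⟨h r, h⟩⟩
    have hUL : ∀ v, U ⊆ L v := fun v c hc => (hU c).1 hc v
    have ht : ∀ v, (L v \ U).card = k - U.card := fun v => by
      rw [Finset.card_sdiff_of_subset (hUL v), hL]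
    generalize k - U.card = t at ht
    have hk1 : 1 ≤ k := by omega
    have b1 := (sum_fixed_le G L).1
    have b2 := (sum_fixed_le G (fun _ => L r)).2 (fun _ _ => rfl)
    have hd := proper_diff G hconn L U hU r k t hL ht hk1
    set F : (V → Finset ℕ) → (G ≃g G) → ℕ := fun M π =>
      cnt M (fun f => IsProper G f ∧ ∀ v, f (π v) = f v) with hF
    have hF1 : ∀ M, F M 1 = cnt M (IsProper G) := by
      intro M
      simp [hF]
    rw [← hF1, ← hF1] at hd
    set B : ℕ := Fintype.card V * (t * k ^ (Fintype.card V - 3)) with hB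
    -- Each non-identity automorphism loses at most `B` fixed colorings.
    have hrest : ∑ π ∈ Finset.univ.erase (1 : G ≃g G), F (fun _ => L r) π ≤
        ∑ π ∈ Finset.univ.erase (1 : G ≃g G), F L π + Fintype.card (G ≃g G) * B := by
      calc _ ≤ ∑ π ∈ Finset.univ.erase (1 : G ≃g G), (F L π + B) := by
            refine Finset.sum_le_sum fun π hπ => ?_
            refine fixed_le G π (haut π ?_) L (fun _ => L r) U k t (fun _ => hL r) hUL
              (fun _ => ht r) hk1
            intro h
            exact Finset.ne_of_mem_erase hπ (RelIso.ext fun v => Equiv.congr_fun h v)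
        _ ≤ _ := by
            rw [Finset.sum_add_distrib, Finset.sum_const, smul_eq_mul]
            gcongr
            exact Finset.card_le_univ _
    have c1 := Finset.add_sum_erase Finset.univ (F L) (Finset.mem_univ 1)
    have c2 := Finset.add_sum_erase Finset.univ (F (fun _ => L r)) (Finset.mem_univ 1)
    have hpow : k ^ (Fintype.card V - 2) = k * k ^ (Fintype.card V - 3) := by
      rw [← pow_succ']; congr 1; omega
    -- The gain of order `t * k ^ (n - 2)` beats all error terms since `k` is large.
    have hbig : 2 * (2 ^ G.edgeFinset.card * B) + 2 * (Fintype.card (G ≃g G) * B) ≤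
        t * k ^ (Fintype.card V - 2) := by
      rw [hpow, hB]
      calc _ = (2 * 2 ^ G.edgeFinset.card * Fintype.card V +
            2 * Fintype.card (G ≃g G) * Fintype.card V) * (t * k ^ (Fintype.card V - 3)) := by ring
        _ ≤ k * (t * k ^ (Fintype.card V - 3)) := Nat.mul_le_mul_right _ (by omega)
        _ = _ := by ring
    have hd' : t * k ^ (Fintype.card V - 2) + 2 * F (fun _ => L r) 1 ≤
        2 * F L 1 + 2 * (2 ^ G.edgeFinset.card * B) := by
      zify [hB]
      linarith
    have hfin : ∑ π, F (fun _ => L r) π ≤ ∑ π, F L π := by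
      rw [← c1, ← c2]
      linarith
    exact Nat.le_of_mul_le_mul_right (b2.trans (hfin.trans b1)) Fintype.card_pos
  have hmem : unlabeledP G k ∈ {n | ∃ L : V → Finset ℕ, (∀ v, (L v).card = k) ∧ n = uell G L} :=
    ⟨fun _ => Finset.range k, fun _ => Finset.card_range k, by
      rw [← unlabeledP_eq, Finset.card_range]⟩
  refine le_antisymm (Nat.sInf_le hmem) ?_
  obtain ⟨L, hL, h⟩ := Nat.sInf_mem ⟨_, hmem⟩
  rw [Pell, h]
  exact hlow L hL
end

section
/- Let G be a chordal finite simple graph, i.e., every cycle in G of length at least 4 has a chord (for every cycle v₁v₂…vₜv₁ in G with t ≥ 4, some two vertices of the cycle that are not consecutive on the cycle are adjacent in G). Then for every k ∈ ℕ and every k-assignment L for G, P(G,L) ≥ P(G,k); that is, P_ℓ(G,k) = P(G,k) for all k ∈ ℕ. -/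
namespace ChordalList

variable {V : Type*}

/-! ### Shortest paths and chordless cycles -/

/-- The graph on the whole of `V` keeping only the edges of `G` with both ends in `T`. -/
def restrict (G : SimpleGraph V) (T : Set V) : SimpleGraph V where
  Adj x y := G.Adj x y ∧ x ∈ T ∧ y ∈ T
  symm := ⟨fun _ _ h => ⟨h.1.symm, h.2.2, h.2.1⟩⟩
  loopless := ⟨fun _ h => h.1.ne rfl⟩

lemma restrict_le (G : SimpleGraph V) (T : Set V) : restrict G T ≤ G := fun _ _ h => h.1

lemma restrict_mono (G : SimpleGraph V) {T T' : Set V} (h : T ⊆ T') :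
    restrict G T ≤ restrict G T' := fun _ _ h' => ⟨h'.1, h h'.2.1, h h'.2.2⟩

lemma support_restrict {G : SimpleGraph V} {T : Set V} {a b : V} (p : (restrict G T).Walk a b)
    (ha : a ∈ T) : ∀ x ∈ p.support, x ∈ T := by
  induction p with
  | nil => intro x hx; simp at hx; exact hx ▸ ha
  | cons h p ih =>
    intro x hx
    rw [SimpleGraph.Walk.support_cons, List.mem_cons] at hx
    rcases hx with rfl | hx
    · exact ha
    · exact ih h.2.2 x hx

lemma geodesic_getVert {H : SimpleGraph V} {a b : V} (p : H.Walk a b)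
    (hp : p.length = H.dist a b) {i j : ℕ} (hij : i < j) (hj : j ≤ p.length)
    (h : H.Adj (p.getVert i) (p.getVert j)) : s(p.getVert i, p.getVert j) ∈ p.edges := by
  by_cases hji : j = i + 1
  · subst hji
    exact p.mk_mem_edges_iff_exists.2 ⟨i, by omega, rfl⟩
  · exfalso
    have hlen := SimpleGraph.dist_le ((p.take i).append (SimpleGraph.Walk.cons h (p.drop j)))
    simp [SimpleGraph.Walk.take_length, SimpleGraph.Walk.drop_length] at hlen
    omega

/-- Shortest walks are chordless. -/
lemma geodesic_edge {H : SimpleGraph V} {a b : V} (p : H.Walk a b)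
    (hp : p.length = H.dist a b) {u w : V} (hu : u ∈ p.support) (hw : w ∈ p.support)
    (h : H.Adj u w) : s(u, w) ∈ p.edges := by
  obtain ⟨i, rfl, hi⟩ := SimpleGraph.Walk.mem_support_iff_exists_getVert.1 hu
  obtain ⟨j, rfl, hj⟩ := SimpleGraph.Walk.mem_support_iff_exists_getVert.1 hw
  rcases lt_trichotomy i j with hij | rfl | hij
  · exact geodesic_getVert p hp hij hj h
  · exact absurd rfl h.ne
  · rw [Sym2.eq_swap]; exact geodesic_getVert p hp hij hi h.symm

/-- Every cycle of length at least `4` has a chord. -/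
def Chordal (G : SimpleGraph V) : Prop :=
  ∀ (v : V) (c : G.Walk v v), c.IsCycle → 4 ≤ c.length →
    ∃ u w : V, u ∈ c.support ∧ w ∈ c.support ∧ G.Adj u w ∧ s(u, w) ∉ c.edges

/-- Two neighbors of `v` that can be joined by a path whose inner vertices avoid the closed
neighborhood of `v` are adjacent: otherwise a shortest such path together with `v` is a
chordless cycle. -/
lemma adj_of_reachable_restrict {G : SimpleGraph V} (hG : Chordal G) {v a b : V} {T : Set V}
    (hva : G.Adj v a) (hvb : G.Adj v b) (hab : a ≠ b) (haT : a ∈ T) (hvT : v ∉ T)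
    (hT : ∀ x ∈ T, G.Adj v x → x = a ∨ x = b)
    (hr : (restrict G T).Reachable a b) : G.Adj a b := by
  by_contra hnab
  obtain ⟨p, hp, hlen⟩ := hr.exists_path_of_dist
  have hsup := support_restrict p haT
  have h2 : 2 ≤ p.length := by
    by_contra! hlt
    have h01 : p.length = 0 ∨ p.length = 1 := by omega
    rcases h01 with h0 | h1
    · exact hab (SimpleGraph.Walk.eq_of_length_eq_zero h0)
    · exact hnab (SimpleGraph.Walk.adj_of_length_eq_one h1).1
  have hv : v ∉ p.support := fun h => hvT (hsup v h)
  let q := p.mapLe (restrict_le G T)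
  have hq : q.IsPath := hp.mapLe _
  have hqs : q.support = p.support := by simp [q]
  have hqe : q.edges = p.edges := by simp [q]
  have hql : q.length = p.length := by simp [q]
  have hc : (SimpleGraph.Walk.cons hva (q.concat hvb.symm)).IsCycle := by
    rw [SimpleGraph.Walk.cons_isCycle_iff]
    refine ⟨hq.concat (by rwa [hqs]) _, ?_⟩
    rw [SimpleGraph.Walk.edges_concat, List.concat_eq_append, List.mem_append, hqe]
    rintro (h | h)
    · exact hv (p.fst_mem_support_of_mem_edges h)
    · simp at h
      rcases h with h | h
      · exact hvb.ne h.1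
      · exact hab h
  obtain ⟨u, w, hu, hw, huw, hnot⟩ := hG v _ hc (by simp [hql]; omega)
  have key : ∀ x, x ∈ (SimpleGraph.Walk.cons hva (q.concat hvb.symm)).support →
      x = v ∨ x ∈ p.support := by
    intro x hx
    simp [SimpleGraph.Walk.support_concat, hqs] at hx
    tauto
  simp only [SimpleGraph.Walk.edges_cons, SimpleGraph.Walk.edges_concat, List.concat_eq_append,
    List.mem_cons, List.mem_append, hqe, List.not_mem_nil, or_false, not_or] at hnot
  obtain ⟨hn1, hn2, hn3⟩ := hnot
  rcases key u hu with rfl | hup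
  · rcases key w hw with rfl | hwp
    · exact huw.ne rfl
    · rcases hT w (hsup w hwp) huw with rfl | rfl
      · exact hn1 rfl
      · exact hn3 Sym2.eq_swap
  · rcases key w hw with rfl | hwp
    · rcases hT u (hsup u hup) huw.symm with rfl | rfl
      · exact hn1 Sym2.eq_swap
      · exact hn3 rfl
    · exact hn2 (geodesic_edge p hlen hup hwp ⟨huw, hsup u hup, hsup w hwp⟩)

/-! ### Simplicial vertices -/

/-- The neighbors of `s` in `S` are pairwise adjacent. -/
def Simplicial (G : SimpleGraph V) (S : Finset V) (s : V) : Prop :=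
  ∀ x ∈ S, ∀ y ∈ S, G.Adj s x → G.Adj s y → x ≠ y → G.Adj x y

open Classical in
/-- Dirac's theorem in rooted form: if `v` is not adjacent to every other vertex of `S`, some
simplicial vertex of `S` lies outside the closed neighborhood of `v`. -/
lemma exists_simplicial_not_adj {G : SimpleGraph V} (hG : Chordal G) (S : Finset V) :
    ∀ v ∈ S, (∃ w ∈ S, w ≠ v ∧ ¬ G.Adj v w) →
      ∃ s ∈ S, s ≠ v ∧ ¬ G.Adj v s ∧ Simplicial G S s := by
  induction S using Finset.strongInduction with
  | H S ih =>
  rintro v hvS ⟨c, hcS, hcv, hvc⟩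
  let T : Set V := {x | x ∈ S ∧ x ≠ v ∧ ¬ G.Adj v x}
  let C : Finset V := S.filter fun x => x ∈ T ∧ (restrict G T).Reachable c x
  let A : Finset V := S.filter fun a => G.Adj v a ∧ ∃ x ∈ C, G.Adj a x
  have memC : ∀ x, x ∈ C ↔ x ∈ T ∧ (restrict G T).Reachable c x := fun x => by
    simp only [C, Finset.mem_filter]
    exact ⟨fun h => h.2, fun h => ⟨h.1.1, h⟩⟩
  have memA : ∀ x, x ∈ A ↔ x ∈ S ∧ G.Adj v x ∧ ∃ y ∈ C, G.Adj x y := fun x => by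
    simp only [A, Finset.mem_filter]
  have hcC : c ∈ C := (memC c).2 ⟨⟨hcS, hcv, hvc⟩, SimpleGraph.Reachable.refl _⟩
  have hnbr : ∀ x ∈ C, ∀ y ∈ S, G.Adj x y → y ∈ C ∪ A := by
    intro x hx y hy hxy
    rw [Finset.mem_union]
    have hx' := (memC x).1 hx
    by_cases hvy : G.Adj v y
    · exact Or.inr ((memA y).2 ⟨hy, hvy, x, hx, hxy.symm⟩)
    · have hyv : y ≠ v := by rintro rfl; exact hx'.1.2.2 hxy.symm
      refine Or.inl ((memC y).2 ⟨⟨hy, hyv, hvy⟩, hx'.2.trans ?_⟩)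
      exact SimpleGraph.Adj.reachable ⟨hxy, hx'.1, hy, hyv, hvy⟩
  have hA : ∀ a ∈ A, ∀ b ∈ A, a ≠ b → G.Adj a b := by
    intro a ha b hb hab
    obtain ⟨-, hva, x, hx, hax⟩ := (memA a).1 ha
    obtain ⟨-, hvb, y, hy, hby⟩ := (memA b).1 hb
    have hx' := (memC x).1 hx
    have hy' := (memC y).1 hy
    have hsub : T ⊆ T ∪ {a, b} := Set.subset_union_left
    refine adj_of_reachable_restrict hG (T := T ∪ {a, b}) hva hvb hab (by simp) ?_ ?_ ?_
    · rintro (h | h | h)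
      · exact h.2.1 rfl
      · exact hva.ne h
      · exact hvb.ne h
    · rintro z (h | h | h) hz
      · exact absurd hz h.2.2
      · exact Or.inl h
      · exact Or.inr h
    · have h1 : (restrict G (T ∪ {a, b})).Reachable a x :=
        SimpleGraph.Adj.reachable ⟨hax, by simp, hsub hx'.1⟩
      have h2 : (restrict G (T ∪ {a, b})).Reachable b y :=
        SimpleGraph.Adj.reachable ⟨hby, by simp, hsub hy'.1⟩
      exact (h1.trans ((hx'.2.symm.trans hy'.2).mono (restrict_mono G hsub))).trans h2.symm
  have hss : C ∪ A ⊂ S := by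
    refine Finset.ssubset_iff_subset_ne.2 ⟨?_, ?_⟩
    · exact Finset.union_subset (Finset.filter_subset _ _) (Finset.filter_subset _ _)
    · intro h
      rw [← h, Finset.mem_union] at hvS
      rcases hvS with h | h
      · exact ((memC v).1 h).1.2.1 rfl
      · exact ((memA v).1 h).2.1.ne rfl
  -- A simplicial vertex of `C ∪ A` lying in `C` is simplicial in `S` as well.
  suffices h : ∃ s ∈ C, Simplicial G (C ∪ A) s by
    obtain ⟨s, hs, hsimp⟩ := h
    have hs' := (memC s).1 hs
    exact ⟨s, hs'.1.1, hs'.1.2.1, hs'.1.2.2, fun x hx y hy hsx hsy hxy =>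
      hsimp x (hnbr s hs x hx hsx) y (hnbr s hs y hy hsy) hsx hsy hxy⟩
  by_cases h1 : ∃ a ∈ A, ∃ w ∈ C ∪ A, w ≠ a ∧ ¬ G.Adj a w
  · obtain ⟨a, ha, hw⟩ := h1
    obtain ⟨s, hs, hsa, has, hsimp⟩ := ih _ hss a (Finset.mem_union_right _ ha) hw
    refine ⟨s, (Finset.mem_union.1 hs).resolve_right fun h => ?_, hsimp⟩
    exact has (hA a ha s h hsa.symm)
  push Not at h1
  by_cases h2 : ∃ x ∈ C, ∃ w ∈ C ∪ A, w ≠ x ∧ ¬ G.Adj x w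
  · obtain ⟨x, hx, hw⟩ := h2
    obtain ⟨s, hs, hsx, hxs, hsimp⟩ := ih _ hss x (Finset.mem_union_left _ hx) hw
    refine ⟨s, (Finset.mem_union.1 hs).resolve_right fun h => ?_, hsimp⟩
    exact hxs (h1 s h x (Finset.mem_union_left _ hx) hsx.symm).symm
  push Not at h2
  refine ⟨c, hcC, fun x hx y hy _ _ hxy => ?_⟩
  rcases Finset.mem_union.1 hx with h | h
  · exact h2 x h y hy hxy.symm
  · exact h1 x h y hy hxy.symm

lemma exists_simplicial {G : SimpleGraph V} (hG : Chordal G) {S : Finset V} (hS : S.Nonempty) :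
    ∃ s ∈ S, Simplicial G S s := by
  by_cases h : ∃ v ∈ S, ∃ w ∈ S, w ≠ v ∧ ¬ G.Adj v w
  · obtain ⟨v, hv, hw⟩ := h
    obtain ⟨s, hs, -, -, hsimp⟩ := exists_simplicial_not_adj hG S v hv hw
    exact ⟨s, hs, hsimp⟩
  · push Not at h
    obtain ⟨s, hs⟩ := hS
    exact ⟨s, hs, fun x hx y hy _ _ hxy => h x hx y hy hxy.symm⟩

/-! ### Counting list colorings -/

section Count

variable [Fintype V]

open Classical in
/-- The proper `L`-colorings of the subgraph of `G` induced on `S`, encoded as functions on all of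
`V` that vanish outside `S`. -/
noncomputable def colorings (G : SimpleGraph V) (L : V → Finset ℕ) (S : Finset V) :
    Finset (V → ℕ) :=
  (Fintype.piFinset fun v => if v ∈ S then L v else {0}).filter
    fun f => ∀ u ∈ S, ∀ v ∈ S, G.Adj u v → f u ≠ f v

lemma mem_colorings {G : SimpleGraph V} {L : V → Finset ℕ} {S : Finset V} {f : V → ℕ} :
    f ∈ colorings G L S ↔ (∀ v ∈ S, f v ∈ L v) ∧ (∀ v ∉ S, f v = 0) ∧
      ∀ u ∈ S, ∀ v ∈ S, G.Adj u v → f u ≠ f v := by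
  classical
  simp only [colorings, Finset.mem_filter, Fintype.mem_piFinset, ← and_assoc]
  refine and_congr_left fun _ => ⟨fun h => ⟨fun v hv => ?_, fun v hv => ?_⟩, fun h v => ?_⟩
  · simpa [hv] using h v
  · simpa [hv] using h v
  · by_cases hv : v ∈ S
    · simpa [hv] using h.1 v hv
    · simpa [hv] using h.2 v hv

open Classical in
/-- Colorings of `S` are counted by the colors left for `s` by each coloring of `S \ {s}`. -/
lemma card_colorings {G : SimpleGraph V} {L : V → Finset ℕ} {S : Finset V} {s : V} (hs : s ∈ S) :
    (colorings G L S).card = ∑ g ∈ colorings G L (S.erase s),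
      (L s \ (S.filter fun x => G.Adj s x).image g).card := by
  have hmaps : ∀ f ∈ colorings G L S,
      Function.update f s 0 ∈ colorings G L (S.erase s) := by
    intro f hf
    rw [mem_colorings] at hf ⊢
    obtain ⟨h1, h2, h3⟩ := hf
    refine ⟨fun v hv => ?_, fun v hv => ?_, fun u hu v hv huv => ?_⟩
    · rw [Function.update_of_ne (Finset.ne_of_mem_erase hv)]
      exact h1 v (Finset.mem_of_mem_erase hv)
    · by_cases hvs : v = s
      · subst hvs; simp
      · rw [Function.update_of_ne hvs]
        exact h2 v fun h => hv (Finset.mem_erase.2 ⟨hvs, h⟩)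
    · rw [Function.update_of_ne (Finset.ne_of_mem_erase hu),
        Function.update_of_ne (Finset.ne_of_mem_erase hv)]
      exact h3 u (Finset.mem_of_mem_erase hu) v (Finset.mem_of_mem_erase hv) huv
  rw [Finset.card_eq_sum_card_fiberwise hmaps]
  refine Finset.sum_congr rfl fun g hg => ?_
  rw [mem_colorings] at hg
  obtain ⟨g1, g2, g3⟩ := hg
  refine Finset.card_bij' (fun f _ => f s) (fun c _ => Function.update g s c) ?_ ?_ ?_ ?_
  · intro f hf
    rw [Finset.mem_filter, mem_colorings] at hf
    obtain ⟨⟨h1, h2, h3⟩, rfl⟩ := hf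
    simp only [Finset.mem_sdiff, Finset.mem_image, Finset.mem_filter, not_exists, not_and]
    refine ⟨h1 s hs, ?_⟩
    rintro x ⟨hx, hsx⟩
    rw [Function.update_of_ne hsx.ne']
    exact (h3 s hs x hx hsx).symm
  · intro c hc
    simp only [Finset.mem_sdiff, Finset.mem_image, Finset.mem_filter, not_exists, not_and] at hc
    obtain ⟨hcL, hc⟩ := hc
    rw [Finset.mem_filter, mem_colorings]
    refine ⟨⟨fun v hv => ?_, fun v hv => ?_, fun u hu v hv huv => ?_⟩, ?_⟩
    · by_cases hvs : v = s
      · subst hvs; simpa using hcL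
      · rw [Function.update_of_ne hvs]; exact g1 v (Finset.mem_erase.2 ⟨hvs, hv⟩)
    · have hvs : v ≠ s := by rintro rfl; exact hv hs
      rw [Function.update_of_ne hvs]
      exact g2 v fun h => hv (Finset.mem_of_mem_erase h)
    · by_cases hus : u = s
      · subst hus
        rw [Function.update_self, Function.update_of_ne huv.ne']
        exact Ne.symm (hc v ⟨hv, huv⟩)
      · by_cases hvs : v = s
        · subst hvs
          rw [Function.update_self, Function.update_of_ne huv.ne]
          exact hc u ⟨hu, huv.symm⟩
        · rw [Function.update_of_ne hus, Function.update_of_ne hvs]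
          exact g3 u (Finset.mem_erase.2 ⟨hus, hu⟩) v (Finset.mem_erase.2 ⟨hvs, hv⟩) huv
    · rw [Function.update_idem, ← g2 s (Finset.notMem_erase s S), Function.update_eq_self]
  · intro f hf
    rw [Finset.mem_filter] at hf
    obtain ⟨-, rfl⟩ := hf
    simp
  · intro c _
    simp

lemma card_colorings_const_le {G : SimpleGraph V} (hG : Chordal G) {k : ℕ} {L : V → Finset ℕ}
    (hL : ∀ v, (L v).card = k) (S : Finset V) :
    (colorings G (fun _ => Finset.range k) S).card ≤ (colorings G L S).card := by
  classical
  induction S using Finset.strongInduction with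
  | H S ih =>
  rcases S.eq_empty_or_nonempty with rfl | hS
  · refine Finset.card_le_card fun f hf => ?_
    rw [mem_colorings] at hf ⊢
    exact ⟨by simp, hf.2⟩
  obtain ⟨s, hs, hsimp⟩ := exists_simplicial hG hS
  rw [card_colorings hs, card_colorings hs]
  set N := S.filter fun x => G.Adj s x with hN
  have hconst : ∀ g ∈ colorings G (fun _ => Finset.range k) (S.erase s),
      (Finset.range k \ N.image g).card = k - N.card := by
    intro g hg
    rw [mem_colorings] at hg
    obtain ⟨g1, -, g3⟩ := hg
    have hNS : ∀ x ∈ N, x ∈ S.erase s := fun x hx => by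
      rw [hN, Finset.mem_filter] at hx
      exact Finset.mem_erase.2 ⟨hx.2.ne', hx.1⟩
    have hinj : Set.InjOn g N := by
      intro x hx y hy hxy
      by_contra hne
      have hx' := Finset.mem_filter.1 hx
      have hy' := Finset.mem_filter.1 hy
      exact g3 x (hNS x hx) y (hNS y hy)
        (hsimp x hx'.1 y hy'.1 hx'.2 hy'.2 hne) hxy
    have hsub : N.image g ⊆ Finset.range k := by
      intro c hc
      obtain ⟨x, hx, rfl⟩ := Finset.mem_image.1 hc
      exact g1 x (hNS x hx)
    rw [Finset.card_sdiff_of_subset hsub, Finset.card_image_of_injOn hinj, Finset.card_range]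
  have hlist : ∀ g ∈ colorings G L (S.erase s),
      k - N.card ≤ (L s \ N.image g).card := by
    intro g _
    have h1 := Finset.le_card_sdiff (N.image g) (L s)
    have h2 : (N.image g).card ≤ N.card := Finset.card_image_le
    rw [hL s] at h1
    omega
  rw [Finset.sum_congr rfl hconst, Finset.sum_const, smul_eq_mul]
  calc _ ≤ (colorings G L (S.erase s)).card * (k - N.card) :=
        Nat.mul_le_mul_right _ (ih _ (Finset.erase_ssubset hs))
    _ = ∑ g ∈ colorings G L (S.erase s), (k - N.card) := by simp
    _ ≤ _ := Finset.sum_le_sum hlist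

lemma listP_eq (G : SimpleGraph V) (L : V → Finset ℕ) :
    listP G L = (colorings G L Finset.univ).card := by
  rw [listP, ← Nat.card_eq_finsetCard]
  refine Nat.card_congr (Equiv.subtypeEquivRight fun f => ?_)
  rw [mem_colorings]
  simp only [IsProper, Finset.mem_univ, not_true_eq_false, forall_true_left, IsEmpty.forall_iff,
    implies_true, true_and]
  exact and_comm

end Count

lemma chromP_eq (G : SimpleGraph V) (k : ℕ) :
    chromP G k = listP G fun _ => Finset.range k := by
  refine Nat.card_congr
    { toFun := fun f => ⟨fun v => f.1 v, fun u v h h' => f.2 h (Fin.ext h'), fun v => by simp⟩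
      invFun := fun f => ⟨fun v => ⟨f.1 v, Finset.mem_range.1 (f.2.2 v)⟩,
        fun u v h h' => f.2.1 h (congrArg Fin.val h')⟩
      left_inv := fun f => rfl
      right_inv := fun f => rfl }

end ChordalList

/-- Kostochka–Sidorenko: chordal graphs.
If `G` is chordal (every cycle of length at least 4 has a chord, i.e. an edge of `G`
between two vertices of the cycle that is not an edge of the cycle), then for every
`k` and every `k`-assignment `L`, `P(G,L) ≥ P(G,k)`; that is, `P_ℓ(G,k) = P(G,k)`. -/
theorem statement_13 {V : Type*} [Fintype V] (G : SimpleGraph V)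
    (hchordal : ∀ (v : V) (c : G.Walk v v), c.IsCycle → 4 ≤ c.length →
      ∃ u w : V, u ∈ c.support ∧ w ∈ c.support ∧ G.Adj u w ∧ s(u, w) ∉ c.edges) :
    ∀ k : ℕ,
      (∀ L : V → Finset ℕ, (∀ v, (L v).card = k) → chromP G k ≤ listP G L) ∧
      sInf {n | ∃ L : V → Finset ℕ, (∀ v, (L v).card = k) ∧ n = listP G L} =
        chromP G k := by
  intro k
  have hle : ∀ L : V → Finset ℕ, (∀ v, (L v).card = k) → chromP G k ≤ listP G L := by
    intro L hL
    rw [ChordalList.chromP_eq, ChordalList.listP_eq, ChordalList.listP_eq]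
    exact ChordalList.card_colorings_const_le hchordal hL Finset.univ
  refine ⟨hle, IsLeast.csInf_eq ⟨?_, ?_⟩⟩
  · exact ⟨fun _ => Finset.range k, fun _ => Finset.card_range k, ChordalList.chromP_eq G k⟩
  · rintro n ⟨L, hL, rfl⟩
    exact hle L hL
end
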